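/- arXiv:2112.05426 — 2 statements merged into one kernel-verified Lean document; each statement's English description precedes it below -/
import Mathlib

section
/- For every real α > 1 there exists a constant c_α > 1 (one may take the same constant as in the circle case, c_α := min( 1 + 2^{α−4} − 1/8, 1 + (2^{α−1}−1)/(3·2^α+2), 1 + min(2^α−1, (3^α−2^α−1)/2, (4^α−2^α−2)/3)/(4(2^α+1)) )) and an N such that for every n ≥ N there exist a set P of 2n+2 points in the Euclidean plane ℝ² containing a source s, and a point q ∈ ℝ² ∖ P, with the following property: for every feasible range assignment ρ for P with cost_α(ρ) ≤ c_α·opt_α(P) and every feasible range assignment ρ' for P ∪ {q} with cost_α(ρ') ≤ c_α·opt_α(P∪{q}), the number of points p ∈ P ∪ {q} with ρ(p) ≠ ρ'(p) is greater than 2n/3 − 1, where ρ is extended by ρ(q) = 0. (Hence the dynamic broadcast range-assignment problem in ℝ² admits no stable approximation scheme.) -/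
open Finset

attribute [local instance] Classical.propDecidable

/-- A range assignment `ρ` for a finite point set `P` with source `s` is *feasible* if it is
nonnegative on `P` and every point of `P` is reachable from `s` via a sequence of points of `P`
in which each step is within the range of its starting point. -/
def Feasible {X : Type*} [MetricSpace X] (P : Finset X) (s : X) (ρ : X → ℝ) : Prop :=
  (∀ p ∈ P, 0 ≤ ρ p) ∧
  ∀ p ∈ P, ∃ (m : ℕ) (f : ℕ → X), f 0 = s ∧ f m = p ∧ (∀ i ≤ m, f i ∈ P) ∧
    ∀ i < m, dist (f i) (f (i + 1)) ≤ ρ (f i)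

/-- The cost `∑_{p ∈ P} ρ(p)^α` of a range assignment. -/
noncomputable def cost {X : Type*} (α : ℝ) (P : Finset X) (ρ : X → ℝ) : ℝ :=
  ∑ p ∈ P, ρ p ^ α

/-- The optimal broadcast cost: the infimum of `cost α P ρ` over feasible `ρ`. -/
noncomputable def opt {X : Type*} [MetricSpace X] (α : ℝ) (P : Finset X) (s : X) : ℝ :=
  sInf {c : ℝ | ∃ ρ : X → ℝ, Feasible P s ρ ∧ cost α P ρ = c}

/-- The constant `c_α` from the no-SAS proof (same as in the circle case). -/
noncomputable def cAlpha (α : ℝ) : ℝ :=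
  min (1 + 2 ^ (α - 4) - 1 / 8)
    (min (1 + (2 ^ (α - 1) - 1) / (3 * 2 ^ α + 2))
      (1 + min (2 ^ α - 1) (min ((3 ^ α - 2 ^ α - 1) / 2) ((4 ^ α - 2 ^ α - 2) / 3)) /
        (4 * (2 ^ α + 1))))

/-- Gap after chain index `k` : 1 for even `k`, 2 for odd `k`. -/
def gp (k : ℕ) : ℕ := 1 + k % 2

/-- Prefix sums of the gaps. -/
def Gs (k : ℕ) : ℕ := k + k / 2

/-- Price of a gap. -/
noncomputable def ppi (A M : ℝ) (j : ℕ) : ℝ := if j % 2 = 0 then 1 else A + M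

lemma Gs_succ (k : ℕ) : Gs (k + 1) = Gs k + gp k := by unfold Gs gp; omega

lemma Gs_mono {i j : ℕ} (h : i ≤ j) : Gs i ≤ Gs j := by unfold Gs; omega

lemma Gs_strict {i j : ℕ} (h : i < j) : Gs i < Gs j := by unfold Gs; omega

lemma Gs_rev (m k : ℕ) (h : k < 2 * m) : Gs (2 * m - 1 - k) + Gs k = 3 * m - 2 := by
  unfold Gs; omega

lemma sum_pairs (A M : ℝ) (b p : ℕ) :
    ∑ j ∈ Ico b (b + 2 * p), ppi A M j = p * (1 + A + M) := by
  induction p with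
  | zero => simp
  | succ p ih =>
    have e : b + 2 * (p + 1) = b + 2 * p + 1 + 1 := by ring
    rw [e, Finset.sum_Ico_succ_top (by omega), Finset.sum_Ico_succ_top (by omega), ih]
    rcases Nat.mod_two_eq_zero_or_one b with h | h
    · have h1 : (b + 2 * p) % 2 = 0 := by omega
      have h2 : (b + 2 * p + 1) % 2 ≠ 0 := by omega
      simp only [ppi, h1, h2, if_true, if_false]; push_cast; ring
    · have h1 : (b + 2 * p) % 2 ≠ 0 := by omega
      have h2 : (b + 2 * p + 1) % 2 = 0 := by omega
      simp only [ppi, h1, h2, if_true, if_false]; push_cast; ring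

lemma ppi_nonneg {A M : ℝ} (hA : 0 ≤ A) (hM : 0 ≤ M) (j : ℕ) : 0 ≤ ppi A M j := by
  unfold ppi; split_ifs <;> linarith

lemma three_mul_rpow {α : ℝ} (hα : 1 < α) (p : ℕ) : (p : ℝ) * 3 ^ α ≤ ((3 * p : ℕ) : ℝ) ^ α := by
  push_cast
  rw [Real.mul_rpow (by norm_num) (by positivity)]
  have h3 : (0 : ℝ) ≤ 3 ^ α := by positivity
  have hp : (p : ℝ) ≤ (p : ℝ) ^ α := by
    rcases Nat.eq_zero_or_pos p with h | h
    · subst h; simp [Real.zero_rpow (by linarith : α ≠ 0)]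
    · have h1 : (1 : ℝ) ≤ p := by exact_mod_cast h
      calc (p : ℝ) = (p : ℝ) ^ (1 : ℝ) := (Real.rpow_one _).symm
        _ ≤ _ := Real.rpow_le_rpow_of_exponent_le h1 hα.le
  nlinarith

lemma interval_strong {α M : ℝ} (hα : 1 < α) (hM : 0 ≤ M) (hM1 : M ≤ 2 ^ α - 1)
    (hM2 : 2 * M ≤ 3 ^ α - 2 ^ α - 1) (b m : ℕ) (r : ℝ) (hr0 : 0 ≤ r)
    (hr : (Gs (b + m) : ℝ) - Gs b ≤ r) (hpar : m % 2 = 0 ∨ b % 2 = 0) :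
    ∑ j ∈ Ico b (b + m), ppi (2 ^ α) M j + (if 2 ≤ r then M else 0) ≤ r ^ α := by
  have h0 : (0 : ℝ) ≤ r ^ α := by positivity
  have h2r : 2 ≤ r → (2 : ℝ) ^ α ≤ r ^ α := fun h =>
    Real.rpow_le_rpow (by norm_num) h (by linarith)
  rcases Nat.mod_two_eq_zero_or_one m with hm | hm
  · obtain ⟨p, rfl⟩ : ∃ p, m = 2 * p := ⟨m / 2, by omega⟩
    rw [sum_pairs]
    have hG : (Gs (b + 2 * p) : ℝ) = Gs b + (3 * p : ℕ) := by
      have : Gs (b + 2 * p) = Gs b + 3 * p := by unfold Gs; omega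
      rw [this]; push_cast; ring
    have hrp : ((3 * p : ℕ) : ℝ) ≤ r := by rw [hG] at hr; linarith
    rcases Nat.eq_zero_or_pos p with h | h
    · subst h
      simp only [Nat.cast_zero, zero_mul, zero_add]
      split_ifs with h2
      · have := h2r h2; linarith
      · exact h0
    · have h1 : (1 : ℝ) ≤ p := by exact_mod_cast h
      have h3 := three_mul_rpow hα p
      have h4 : ((3 * p : ℕ) : ℝ) ^ α ≤ r ^ α :=
        Real.rpow_le_rpow (by positivity) hrp (by linarith)
      have h5 : (if 2 ≤ r then M else 0) ≤ M := by split_ifs <;> linarith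
      nlinarith
  · obtain ⟨p, rfl⟩ : ∃ p, m = 2 * p + 1 := ⟨m / 2, by omega⟩
    have hb : b % 2 = 0 := by omega
    rw [← add_assoc, Finset.sum_Ico_succ_top (by omega), sum_pairs]
    have hp1 : ppi (2 ^ α) M (b + 2 * p) = 1 := by
      unfold ppi; rw [if_pos (by omega)]
    rw [hp1]
    have hG : (Gs (b + (2 * p + 1)) : ℝ) = Gs b + ((3 * p : ℕ) + 1) := by
      have : Gs (b + (2 * p + 1)) = Gs b + (3 * p + 1) := by unfold Gs; omega
      rw [this]; push_cast; ring
    have hrp : ((3 * p : ℕ) : ℝ) + 1 ≤ r := by rw [hG] at hr; linarith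
    have h4 : (((3 * p : ℕ) : ℝ) + 1) ^ α ≤ r ^ α :=
      Real.rpow_le_rpow (by positivity) hrp (by linarith)
    have h6 := Real.add_rpow_le_rpow_add (a := ((3 * p : ℕ) : ℝ)) (b := 1)
      (by positivity) (by norm_num) hα.le
    rw [Real.one_rpow] at h6
    rcases Nat.eq_zero_or_pos p with h | h
    · subst h
      simp only [Nat.cast_zero, zero_mul, zero_add]
      split_ifs with h2
      · have := h2r h2; linarith
      · simp at h4; simpa using h4
    · have h1 : (1 : ℝ) ≤ p := by exact_mod_cast h
      have h3 := three_mul_rpow hα p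
      have h5 : (if 2 ≤ r then M else 0) ≤ M := by split_ifs <;> linarith
      nlinarith

lemma interval_weak {α M : ℝ} (hα : 1 < α) (hM : 0 ≤ M) (hM1 : M ≤ 2 ^ α - 1)
    (hM2 : 2 * M ≤ 3 ^ α - 2 ^ α - 1) (b m : ℕ) (r : ℝ) (hr0 : 0 ≤ r)
    (hr : (Gs (b + m) : ℝ) - Gs b ≤ r) :
    ∑ j ∈ Ico b (b + m), ppi (2 ^ α) M j ≤ r ^ α + (if 2 ≤ r then M else 0) := by
  have h5 : 0 ≤ (if 2 ≤ r then M else 0) := by split_ifs <;> linarith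
  by_cases hpar : m % 2 = 0 ∨ b % 2 = 0
  · have := interval_strong hα hM hM1 hM2 b m r hr0 hr hpar
    linarith
  · push Not at hpar
    obtain ⟨p, rfl⟩ : ∃ p, m = 2 * p + 1 := ⟨m / 2, by omega⟩
    rw [← add_assoc, Finset.sum_Ico_succ_top (by omega), sum_pairs]
    have hp1 : ppi (2 ^ α) M (b + 2 * p) = 2 ^ α + M := by
      unfold ppi; rw [if_neg (by omega)]
    rw [hp1]
    have hG : (Gs (b + (2 * p + 1)) : ℝ) = Gs b + ((3 * p : ℕ) + 2) := by
      have : Gs (b + (2 * p + 1)) = Gs b + (3 * p + 2) := by unfold Gs; omega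
      rw [this]; push_cast; ring
    have hrp : ((3 * p : ℕ) : ℝ) + 2 ≤ r := by rw [hG] at hr; linarith
    have h4 : (((3 * p : ℕ) : ℝ) + 2) ^ α ≤ r ^ α :=
      Real.rpow_le_rpow (by positivity) hrp (by linarith)
    have h6 := Real.add_rpow_le_rpow_add (a := ((3 * p : ℕ) : ℝ)) (b := 2)
      (by positivity) (by norm_num) hα.le
    have h3 := three_mul_rpow hα p
    have h2 : 2 ≤ r := by
      have : (0 : ℝ) ≤ ((3 * p : ℕ) : ℝ) := by positivity
      linarith
    rw [if_pos h2]
    have hp : (0 : ℝ) ≤ p := by positivity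
    nlinarith

lemma fwd_interval (F : Finset ℕ) (l : ℕ) (r : ℝ) (hr : 0 ≤ r)
    (hF : ∀ j ∈ F, l ≤ j ∧ (Gs (j + 1) : ℝ) - Gs l ≤ r) :
    ∃ m, F ⊆ Ico l (l + m) ∧ (Gs (l + m) : ℝ) - Gs l ≤ r := by
  rcases F.eq_empty_or_nonempty with h | h
  · exact ⟨0, by simp [h], by simpa using hr⟩
  · obtain ⟨h1, h2⟩ := hF _ (F.max'_mem h)
    refine ⟨F.max' h + 1 - l, ?_, ?_⟩
    · intro j hj
      have := F.le_max' j hj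
      have := (hF j hj).1
      rw [Finset.mem_Ico]; omega
    · have : l + (F.max' h + 1 - l) = F.max' h + 1 := by omega
      rw [this]; exact h2

lemma bwd_interval (F : Finset ℕ) (l : ℕ) (r : ℝ) (hr : 0 ≤ r)
    (hF : ∀ j ∈ F, j + 1 ≤ l ∧ (Gs l : ℝ) - Gs j ≤ r) :
    ∃ b m, F ⊆ Ico b (b + m) ∧ (Gs (b + m) : ℝ) - Gs b ≤ r := by
  rcases F.eq_empty_or_nonempty with h | h
  · exact ⟨0, 0, by simp [h], by simpa using hr⟩
  · obtain ⟨h1, h2⟩ := hF _ (F.min'_mem h)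
    refine ⟨F.min' h, l - F.min' h, ?_, ?_⟩
    · intro j hj
      have := F.min'_le j hj
      have := (hF j hj).1
      rw [Finset.mem_Ico]; omega
    · have : F.min' h + (l - F.min' h) = l := by omega
      rw [this]; exact h2

lemma double_count (V U : Finset ℕ) (w : ℕ → ℝ) (hw : ∀ j, 0 ≤ w j) (rel : ℕ → ℕ → Prop)
    [∀ u j, Decidable (rel u j)]
    (h : ∀ j ∈ V, ∃ u ∈ U, rel u j) :
    ∑ j ∈ V, w j ≤ ∑ u ∈ U, ∑ j ∈ V with rel u j, w j := by
  simp_rw [Finset.sum_filter]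
  rw [Finset.sum_comm]
  refine Finset.sum_le_sum fun j hj => ?_
  obtain ⟨u, hu, hr⟩ := h j hj
  calc w j = if rel u j then w j else 0 := by rw [if_pos hr]
    _ ≤ _ := Finset.single_le_sum (f := fun u => if rel u j then w j else 0)
      (fun i _ => by split_ifs <;> simp [hw]) hu

/-- Start of the block of gaps that `u` may cover in forward direction. -/
def lf (m a u : ℕ) : ℕ := if u ≤ 2 * a then u else max u (2 * m - 1 - 2 * a)

/-- The valid gaps. -/
def Vs (m a J : ℕ) : Finset ℕ :=
  (range (2 * m - 1)).filter
    (fun j => (J ≤ j ∧ j < 2 * a) ∨ (2 * m - 1 - 2 * a ≤ j ∧ j < 2 * m - 1 - J))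

/-- Number of lost gaps. -/
def Ls (m a J : ℕ) : ℕ := 2 * J + (2 * m - 1 - 4 * a)

lemma sum_V_ge {A M : ℝ} (hA : 1 ≤ A) (hM : 0 ≤ M) (m a J : ℕ) (hm : 1 ≤ m) :
    (m : ℝ) * (1 + A + M) - (A + M) * (Ls m a J + 1) ≤ ∑ j ∈ Vs m a J, ppi A M j := by
  have h1 : ∑ j ∈ range (2 * m), ppi A M j = m * (1 + A + M) := by
    have := sum_pairs A M 0 m
    rwa [zero_add, ← Finset.range_eq_Ico] at this
  have e : 2 * m = 2 * m - 1 + 1 := by omega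
  rw [e, Finset.sum_range_succ] at h1
  have hle : ∀ j, ppi A M j ≤ A + M := by
    intro j; unfold ppi; split_ifs <;> linarith
  have h2 := Finset.sum_filter_add_sum_filter_not (range (2 * m - 1))
    (fun j => (J ≤ j ∧ j < 2 * a) ∨ (2 * m - 1 - 2 * a ≤ j ∧ j < 2 * m - 1 - J)) (ppi A M)
  set W := (range (2 * m - 1)).filter
    (fun j => ¬ ((J ≤ j ∧ j < 2 * a) ∨ (2 * m - 1 - 2 * a ≤ j ∧ j < 2 * m - 1 - J))) with hW
  have h3 : ∑ j ∈ W, ppi A M j ≤ W.card * (A + M) := by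
    have := Finset.sum_le_card_nsmul W (ppi A M) (A + M) (fun j _ => hle j)
    rwa [nsmul_eq_mul] at this
  have h4 : W.card ≤ Ls m a J := by
    have hs : W ⊆ range J ∪ (Ico (2 * a) (2 * m - 1 - 2 * a) ∪ Ico (2 * m - 1 - J) (2 * m - 1)) := by
      intro j hj
      simp only [hW, Finset.mem_filter, Finset.mem_range] at hj
      simp only [Finset.mem_union, Finset.mem_range, Finset.mem_Ico]
      omega
    have c1 := Finset.card_le_card hs
    have c2 := Finset.card_union_le (range J)
      (Ico (2 * a) (2 * m - 1 - 2 * a) ∪ Ico (2 * m - 1 - J) (2 * m - 1))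
    have c3 := Finset.card_union_le (Ico (2 * a) (2 * m - 1 - 2 * a))
      (Ico (2 * m - 1 - J) (2 * m - 1))
    simp only [Finset.card_range, Nat.card_Ico] at c1 c2 c3
    unfold Ls; omega
  have h5 : (W.card : ℝ) ≤ Ls m a J := by exact_mod_cast h4
  have h6 := hle (2 * m - 1)
  have h7 : (W.card : ℝ) * (A + M) ≤ Ls m a J * (A + M) :=
    mul_le_mul_of_nonneg_right h5 (by linarith)
  unfold Vs
  linarith

/-- abnormal (forward) indices -/
noncomputable def abn (m : ℕ) (r : ℕ → ℝ) : Finset ℕ :=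
  (range (2 * m)).filter (fun u => (u % 2 = 0 ∧ 2 ≤ r u) ∨ (u % 2 = 1 ∧ r u < 2))

lemma core_fwd {α M : ℝ} (hα : 1 < α) (hM : 0 ≤ M) (hM1 : M ≤ 2 ^ α - 1)
    (hM2 : 2 * M ≤ 3 ^ α - 2 ^ α - 1) (m a J : ℕ) (hm : 1 ≤ m)
    (r : ℕ → ℝ) (hr : ∀ u, 0 ≤ r u)
    (hcov : ∀ j ∈ Vs m a J, ∃ u ∈ range (2 * m),
      lf m a u ≤ j ∧ (Gs (j + 1) : ℝ) - Gs (lf m a u) ≤ r u) :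
    (m : ℝ) * (1 + 2 ^ α) + M * (abn m r).card - 4 * 2 ^ α * (Ls m a J + 1) ≤
      ∑ u ∈ range (2 * m), r u ^ α := by
  have hA : (1 : ℝ) ≤ 2 ^ α := by linarith
  have h1 := sum_V_ge hA hM m a J hm
  have h2 := double_count (Vs m a J) (range (2 * m)) (ppi (2 ^ α) M)
    (ppi_nonneg (by linarith) hM)
    (fun u j => lf m a u ≤ j ∧ (Gs (j + 1) : ℝ) - Gs (lf m a u) ≤ r u) hcov
  have h3 : ∀ u ∈ range (2 * m),
      ∑ j ∈ Vs m a J with (lf m a u ≤ j ∧ (Gs (j + 1) : ℝ) - Gs (lf m a u) ≤ r u),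
        ppi (2 ^ α) M j ≤ r u ^ α + M * ((if u % 2 = 1 then 1 else 0)
          - (if (u % 2 = 0 ∧ 2 ≤ r u) ∨ (u % 2 = 1 ∧ r u < 2) then 1 else 0)
          + 2 * (if u ∈ Ico (2 * a + 1) (2 * m - 1 - 2 * a) then 1 else 0)) := by
    intro u hu
    obtain ⟨k, hk1, hk2⟩ := fwd_interval
      (Finset.filter (fun j => lf m a u ≤ j ∧ (Gs (j + 1) : ℝ) - Gs (lf m a u) ≤ r u) (Vs m a J))
      (lf m a u) (r u) (hr u) (fun j hj => (Finset.mem_filter.1 hj).2)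
    have h4 := Finset.sum_le_sum_of_subset_of_nonneg hk1
      (fun j _ _ => ppi_nonneg (A := (2 : ℝ) ^ α) (M := M) (by linarith) hM j)
    refine h4.trans ?_
    have hw := interval_weak hα hM hM1 hM2 _ _ _ (hr u) hk2
    by_cases hc : u ∈ Ico (2 * a + 1) (2 * m - 1 - 2 * a)
    · rw [if_pos hc]
      split_ifs at hw ⊢ <;> linarith
    · rw [if_neg hc]
      have hl : lf m a u = u := by
        rw [Finset.mem_Ico] at hc; unfold lf; split_ifs <;> omega
      rw [hl] at hw hk2 ⊢
      rcases Nat.mod_two_eq_zero_or_one u with h | h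
      · have hs := interval_strong hα hM hM1 hM2 _ _ _ (hr u) hk2 (Or.inr h)
        by_cases h2 : 2 ≤ r u <;> simp [h, h2] at hs ⊢ <;> linarith
      · by_cases h2 : 2 ≤ r u
        · simp [h, h2, not_lt.2 h2] at hw ⊢; linarith
        · simp [h, h2, not_le.1 h2] at hw ⊢; linarith
  have h4 := h1.trans (h2.trans (Finset.sum_le_sum h3))
  rw [Finset.sum_add_distrib, ← Finset.mul_sum, Finset.sum_add_distrib, Finset.sum_sub_distrib,
    ← Finset.mul_sum] at h4
  have e1 : ∑ u ∈ range (2 * m), (if u % 2 = 1 then (1 : ℝ) else 0) = m := by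
    have := sum_pairs 0 0 0 m
    rw [zero_add, ← Finset.range_eq_Ico] at this
    have h5 : ∀ u, (if u % 2 = 1 then (1 : ℝ) else 0) = 1 - ppi 0 0 u := by
      intro u; unfold ppi
      rcases Nat.mod_two_eq_zero_or_one u with h | h <;> simp [h]
    simp_rw [h5]
    rw [Finset.sum_sub_distrib, this]; simp; ring
  have e2 : ∑ u ∈ range (2 * m),
      (if (u % 2 = 0 ∧ 2 ≤ r u) ∨ (u % 2 = 1 ∧ r u < 2) then (1 : ℝ) else 0) = (abn m r).card := by
    rw [Finset.sum_boole]; rfl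
  have e3 : ∑ u ∈ range (2 * m),
      (if u ∈ Ico (2 * a + 1) (2 * m - 1 - 2 * a) then (1 : ℝ) else 0) ≤ Ls m a J := by
    rw [Finset.sum_boole]
    have hs : (range (2 * m)).filter (fun u => u ∈ Ico (2 * a + 1) (2 * m - 1 - 2 * a)) ⊆
        Ico (2 * a + 1) (2 * m - 1 - 2 * a) := fun u hu => (Finset.mem_filter.1 hu).2
    have c := Finset.card_le_card hs
    rw [Nat.card_Ico] at c
    have : ((range (2 * m)).filter (fun u => u ∈ Ico (2 * a + 1) (2 * m - 1 - 2 * a))).card ≤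
      Ls m a J := by unfold Ls; omega
    exact_mod_cast this
  rw [e1, e2] at h4
  have hL : (0 : ℝ) ≤ Ls m a J := by positivity
  have : M * (∑ u ∈ range (2 * m),
      (if u ∈ Ico (2 * a + 1) (2 * m - 1 - 2 * a) then (1 : ℝ) else 0)) ≤ M * Ls m a J :=
    mul_le_mul_of_nonneg_left e3 hM
  have : M * Ls m a J ≤ 2 ^ α * Ls m a J := mul_le_mul_of_nonneg_right (by linarith) hL
  nlinarith

/-- Some in-range edge crosses gap `j` to the right. -/
def ER (m : ℕ) (d : ℕ → ℕ → ℝ) (r : ℕ → ℝ) (j : ℕ) : Prop :=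
  ∃ u v, u ≤ j ∧ j < v ∧ v < 2 * m ∧ d u v ≤ r u

/-- Some in-range edge crosses gap `j` to the left. -/
def EL (m : ℕ) (d : ℕ → ℕ → ℝ) (r : ℕ → ℝ) (j : ℕ) : Prop :=
  ∃ u v, v ≤ j ∧ j < u ∧ u < 2 * m ∧ d u v ≤ r u

/-- x-coordinate of the chain points -/
def xs (m a k : ℕ) : ℕ := min (min (Gs k) (Gs (2 * m - 1 - k))) (3 * a)

/-- The metric properties of the chain which are used. -/
structure Geo (m a : ℕ) (H : ℝ) (d : ℕ → ℕ → ℝ) : Prop where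
  hx : ∀ u v, u < 2 * m → v < 2 * m → (xs m a u : ℝ) - xs m a v ≤ d u v
  hH : ∀ u v, u ≤ 2 * a → 2 * m - 1 - 2 * a ≤ v → v < 2 * m → H ≤ d u v
  symm : ∀ u v, d u v = d v u

lemma xs_rev (m a k : ℕ) (h : k < 2 * m) : xs m a (2 * m - 1 - k) = xs m a k := by
  unfold xs
  have : 2 * m - 1 - (2 * m - 1 - k) = k := by omega
  rw [this, min_comm (Gs k)]

lemma Geo.rev {m a : ℕ} {H : ℝ} {d : ℕ → ℕ → ℝ} (hg : Geo m a H d) (ham : 4 * a < 2 * m - 1) :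
    Geo m a H (fun u v => d (2 * m - 1 - u) (2 * m - 1 - v)) where
  hx u v hu hv := by
    have := hg.hx (2 * m - 1 - u) (2 * m - 1 - v) (by omega) (by omega)
    rwa [xs_rev m a u hu, xs_rev m a v hv] at this
  hH u v hu hv hv2 := by
    rw [hg.symm]
    exact hg.hH _ _ (by omega) (by omega) (by omega)
  symm u v := hg.symm _ _

lemma EL_rev {m : ℕ} {d : ℕ → ℕ → ℝ} {r : ℕ → ℝ} {j : ℕ} (hj : j < 2 * m - 1)
    (h : EL m d r j) :
    ER m (fun u v => d (2 * m - 1 - u) (2 * m - 1 - v)) (fun u => r (2 * m - 1 - u))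
      (2 * m - 2 - j) := by
  obtain ⟨u, v, h1, h2, h3, h4⟩ := h
  refine ⟨2 * m - 1 - u, 2 * m - 1 - v, by omega, by omega, by omega, ?_⟩
  have e1 : 2 * m - 1 - (2 * m - 1 - u) = u := by omega
  have e2 : 2 * m - 1 - (2 * m - 1 - v) = v := by omega
  simpa only [e1, e2] using h4

lemma crossing {m a J : ℕ} {H : ℝ} {d : ℕ → ℕ → ℝ} {r : ℕ → ℝ} (hg : Geo m a H d)
    (ham : 4 * a < 2 * m - 1) (hr : ∀ u, r u < H) {j : ℕ} (hj : j ∈ Vs m a J)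
    (h : ER m d r j) :
    ∃ u ∈ range (2 * m), lf m a u ≤ j ∧ (Gs (j + 1) : ℝ) - Gs (lf m a u) ≤ r u := by
  obtain ⟨u, v, h1, h2, h3, h4⟩ := h
  refine ⟨u, Finset.mem_range.2 (by omega), ?_⟩
  have hjv : j < 2 * m - 1 ∧ ((J ≤ j ∧ j < 2 * a) ∨
      (2 * m - 1 - 2 * a ≤ j ∧ j < 2 * m - 1 - J)) := by
    simpa [Vs] using hj
  have hru := hr u
  have hx := hg.hx v u h3 (by omega)
  have hx' := hg.hx u v (by omega) h3
  rw [hg.symm] at hx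
  rcases hjv.2 with h5 | h5
  · have hl : lf m a u = u := by unfold lf; rw [if_pos (by omega)]
    rw [hl]
    refine ⟨h1, ?_⟩
    by_cases hv : 2 * m - 1 - 2 * a ≤ v
    · have := hg.hH u v (by omega) hv h3; linarith
    · have e1 : xs m a u = Gs u := by unfold xs Gs; omega
      have e2 : Gs (j + 1) ≤ xs m a v := by unfold xs Gs; omega
      have e3 : (Gs (j + 1) : ℝ) ≤ xs m a v := by exact_mod_cast e2
      rw [e1] at hx
      linarith
  · by_cases hu : u ≤ 2 * a
    · have := hg.hH u v hu (by omega) h3; linarith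
    · have hl : lf m a u = max u (2 * m - 1 - 2 * a) := by unfold lf; rw [if_neg hu]
      refine ⟨by rw [hl]; omega, ?_⟩
      have e : Gs (j + 1) + xs m a v ≤ xs m a u + Gs (lf m a u) := by
        rw [hl]; unfold xs Gs; omega
      have e3 : (Gs (j + 1) : ℝ) + xs m a v ≤ xs m a u + Gs (lf m a u) := by exact_mod_cast e
      linarith

lemma fwd_bound {α M : ℝ} (hα : 1 < α) (hM : 0 ≤ M) (hM1 : M ≤ 2 ^ α - 1)
    (hM2 : 2 * M ≤ 3 ^ α - 2 ^ α - 1) {m a J : ℕ} {H : ℝ} {d : ℕ → ℕ → ℝ} {r : ℕ → ℝ}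
    (hg : Geo m a H d) (ham : 4 * a < 2 * m - 1) (hr0 : ∀ u, 0 ≤ r u) (hr : ∀ u, r u < H)
    (hE : ∀ j ∈ Vs m a J, ER m d r j) :
    (m : ℝ) * (1 + 2 ^ α) + M * (abn m r).card - 4 * 2 ^ α * (Ls m a J + 1) ≤
      ∑ u ∈ range (2 * m), r u ^ α :=
  core_fwd hα hM hM1 hM2 m a J (by omega) r hr0 (fun _ hj => crossing hg ham hr hj (hE _ hj))

lemma Vs_rev {m a J j : ℕ} (ham : 4 * a < 2 * m - 1) (hj : j ∈ Vs m a J) :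
    2 * m - 2 - j ∈ Vs m a J := by
  simp only [Vs, Finset.mem_filter, Finset.mem_range] at hj ⊢
  omega

/-- abnormal (backward) indices -/
noncomputable def abn' (m : ℕ) (r : ℕ → ℝ) : Finset ℕ :=
  (range (2 * m)).filter (fun u => (u % 2 = 1 ∧ 2 ≤ r u) ∨ (u % 2 = 0 ∧ r u < 2))

lemma bwd_bound {α M : ℝ} (hα : 1 < α) (hM : 0 ≤ M) (hM1 : M ≤ 2 ^ α - 1)
    (hM2 : 2 * M ≤ 3 ^ α - 2 ^ α - 1) {m a J : ℕ} {H : ℝ} {d : ℕ → ℕ → ℝ} {r : ℕ → ℝ}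
    (hg : Geo m a H d) (ham : 4 * a < 2 * m - 1) (hr0 : ∀ u, 0 ≤ r u) (hr : ∀ u, r u < H)
    (hE : ∀ j ∈ Vs m a J, EL m d r j) :
    (m : ℝ) * (1 + 2 ^ α) + M * (abn' m r).card - 4 * 2 ^ α * (Ls m a J + 1) ≤
      ∑ u ∈ range (2 * m), r u ^ α := by
  have h := fwd_bound hα hM hM1 hM2 (J := J) (hg.rev ham) ham (r := fun u => r (2 * m - 1 - u))
    (fun u => hr0 _) (fun u => hr _) (by
      intro j hj
      have hj' : j < 2 * m - 1 := Finset.mem_range.1 (Finset.mem_filter.1 hj).1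
      have := EL_rev (by omega) (hE _ (Vs_rev ham hj))
      have e : 2 * m - 2 - (2 * m - 2 - j) = j := by omega
      rwa [e] at this)
  rw [Finset.sum_range_reflect (fun u => r u ^ α) (2 * m)] at h
  have hc : (abn' m r).card ≤ (abn m (fun u => r (2 * m - 1 - u))).card := by
    refine Finset.card_le_card_of_injOn (fun u => 2 * m - 1 - u) ?_ ?_
    · intro u hu
      simp only [abn', abn, Finset.coe_filter, Finset.mem_range, Set.mem_ofPred_eq] at hu ⊢
      obtain ⟨h1, h2⟩ := hu
      have e : 2 * m - 1 - (2 * m - 1 - u) = u := by omega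
      refine ⟨by omega, ?_⟩
      rw [e]
      rcases h2 with h2 | h2
      · exact Or.inl ⟨by omega, h2.2⟩
      · exact Or.inr ⟨by omega, h2.2⟩
    · intro u hu v hv huv
      simp only [abn', Finset.coe_filter, Finset.mem_range, Set.mem_ofPred_eq] at hu hv huv
      omega
  have hc' : ((abn' m r).card : ℝ) ≤ (abn m (fun u => r (2 * m - 1 - u))).card := by
    exact_mod_cast hc
  nlinarith

lemma crossing_bwd {m a J : ℕ} {H : ℝ} {d : ℕ → ℕ → ℝ} {r : ℕ → ℝ} (hg : Geo m a H d)
    (ham : 4 * a < 2 * m - 1) (hr : ∀ u, r u < H) {j : ℕ} (hj : j ∈ Vs m a J)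
    (h : EL m d r j) :
    ∃ u ∈ range (2 * m), j + 1 ≤ 2 * m - 1 - lf m a (2 * m - 1 - u) ∧
      (Gs (2 * m - 1 - lf m a (2 * m - 1 - u)) : ℝ) - Gs j ≤ r u := by
  have hj' : j < 2 * m - 1 := Finset.mem_range.1 (Finset.mem_filter.1 hj).1
  obtain ⟨u, hu, h1, h2⟩ := crossing (J := J) (hg.rev ham) ham
    (r := fun u => r (2 * m - 1 - u)) (fun u => hr _) (Vs_rev ham hj) (EL_rev hj' h)
  rw [Finset.mem_range] at hu
  have e : 2 * m - 1 - (2 * m - 1 - u) = u := by omega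
  refine ⟨2 * m - 1 - u, Finset.mem_range.2 (by omega), ?_, ?_⟩
  · rw [e]; omega
  · rw [e]
    have e1 := Gs_rev m (lf m a u) (by omega)
    have e2 := Gs_rev m j (by omega)
    have e3 : 2 * m - 1 - j = 2 * m - 2 - j + 1 := by omega
    rw [e3] at e2
    have e4 : (Gs (2 * m - 1 - lf m a u) : ℝ) + Gs (lf m a u)
      = Gs (2 * m - 2 - j + 1) + Gs j := by exact_mod_cast e1.trans e2.symm
    linarith

lemma le_lf (m a u : ℕ) : u ≤ lf m a u := by unfold lf; split_ifs <;> omega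

lemma two_sided {α : ℝ} (hα : 1 < α) {m a J : ℕ} {H : ℝ} {d : ℕ → ℕ → ℝ} {r : ℕ → ℝ}
    (hg : Geo m a H d) (ham : 4 * a < 2 * m - 1) (hr0 : ∀ u, 0 ≤ r u) (hr : ∀ u, r u < H)
    (hE : ∀ j j', J ≤ j → j < j' → j' ∈ Vs m a J → ER m d r j ∨ EL m d r j') :
    (m : ℝ) * (1 + 2 ^ α) - 2 ^ α * (Ls m a J + 2) ≤ ∑ u ∈ range (2 * m), r u ^ α := by
  have hA : (1 : ℝ) ≤ 2 ^ α := Real.one_le_rpow (by norm_num) (by linarith)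
  have h3A : (0 : ℝ) ≤ 3 ^ α - 2 ^ α - 1 := by
    have := Real.add_rpow_le_rpow_add (a := (2 : ℝ)) (b := 1) (by norm_num) (by norm_num) hα.le
    rw [Real.one_rpow] at this
    norm_num at this; linarith
  have hV : ∀ j ∈ Vs m a J, J ≤ j ∧ j < 2 * m - 1 - J ∧ j < 2 * m := by
    intro j hj
    simp only [Vs, Finset.mem_filter, Finset.mem_range] at hj
    by_cases hJ : J ≤ 2 * a
    · omega
    · omega
  obtain ⟨j0, hj0⟩ : ∃ j0, ∀ j ∈ Vs m a J, (j < j0 → ER m d r j) ∧ (j0 < j → EL m d r j) := by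
    by_cases hall : ∃ j, J ≤ j ∧ ¬ ER m d r j
    · refine ⟨Nat.find hall, fun j hj => ⟨fun h => ?_, fun h => ?_⟩⟩
      · have := Nat.find_min hall h
        by_contra hne
        exact this ⟨(hV j hj).1, hne⟩
      · have := Nat.find_spec hall
        exact (hE _ j this.1 h hj).resolve_left this.2
    · push Not at hall
      exact ⟨2 * m, fun j hj => ⟨fun _ => hall j (hV j hj).1, fun h => by
        have := (hV j hj).2.2; omega⟩⟩
  have h1 := sum_V_ge hA le_rfl m a J (by omega : 1 ≤ m)
  have h1' : ∑ j ∈ Vs m a J, ppi (2 ^ α) 0 j ≤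
      ∑ j ∈ (Vs m a J).erase j0, ppi (2 ^ α) 0 j + 2 ^ α := by
    by_cases hmem : j0 ∈ Vs m a J
    · rw [← Finset.sum_erase_add _ _ hmem]
      have : ppi (2 ^ α) 0 j0 ≤ 2 ^ α := by unfold ppi; split_ifs <;> linarith
      linarith
    · rw [Finset.erase_eq_of_notMem hmem]; linarith
  let rel : ℕ → ℕ → Prop := fun u j =>
    (j < j0 ∧ lf m a u ≤ j ∧ (Gs (j + 1) : ℝ) - Gs (lf m a u) ≤ r u) ∨
    (j0 < j ∧ j + 1 ≤ 2 * m - 1 - lf m a (2 * m - 1 - u) ∧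
      (Gs (2 * m - 1 - lf m a (2 * m - 1 - u)) : ℝ) - Gs j ≤ r u)
  have h2 := double_count ((Vs m a J).erase j0) (range (2 * m)) (ppi (2 ^ α) 0)
    (ppi_nonneg (by linarith) le_rfl) rel (by
      intro j hj
      rw [Finset.mem_erase] at hj
      rcases lt_or_gt_of_ne hj.1 with h | h
      · obtain ⟨u, hu, h3⟩ := crossing hg ham hr hj.2 ((hj0 j hj.2).1 h)
        exact ⟨u, hu, Or.inl ⟨h, h3⟩⟩
      · obtain ⟨u, hu, h3⟩ := crossing_bwd hg ham hr hj.2 ((hj0 j hj.2).2 h)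
        exact ⟨u, hu, Or.inr ⟨h, h3⟩⟩)
  have h3 : ∀ u ∈ range (2 * m), ∑ j ∈ (Vs m a J).erase j0 with rel u j, ppi (2 ^ α) 0 j
      ≤ r u ^ α := by
    intro u hu
    rw [Finset.mem_range] at hu
    have key : ∀ b k, (Finset.filter (fun j => rel u j) ((Vs m a J).erase j0)) ⊆ Ico b (b + k) →
        (Gs (b + k) : ℝ) - Gs b ≤ r u →
        ∑ j ∈ (Vs m a J).erase j0 with rel u j, ppi (2 ^ α) 0 j ≤ r u ^ α := by
      intro b k hs hk
      have h4 := Finset.sum_le_sum_of_subset_of_nonneg hs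
        (fun j _ _ => ppi_nonneg (A := (2 : ℝ) ^ α) (M := 0) (by linarith) le_rfl j)
      have h5 := interval_weak hα le_rfl (by linarith) (by linarith) b k _ (hr0 u) hk
      simp only [ite_self, add_zero] at h5
      exact h4.trans h5
    by_cases huj : u < j0
    · obtain ⟨k, h4, h5⟩ := fwd_interval
        (Finset.filter (fun j => rel u j) ((Vs m a J).erase j0)) (lf m a u) (r u) (hr0 u) (by
          intro j hj
          rcases (Finset.mem_filter.1 hj).2 with h | h
          · exact h.2
          · exfalso
            have := le_lf m a (2 * m - 1 - u); omega)
      exact key _ _ h4 h5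
    · obtain ⟨b, k, h4, h5⟩ := bwd_interval
        (Finset.filter (fun j => rel u j) ((Vs m a J).erase j0))
        (2 * m - 1 - lf m a (2 * m - 1 - u)) (r u) (hr0 u) (by
          intro j hj
          rcases (Finset.mem_filter.1 hj).2 with h | h
          · exfalso
            have := le_lf m a u; omega
          · exact h.2)
      exact key _ _ h4 h5
  have h4 := h2.trans (Finset.sum_le_sum h3)
  simp only [add_zero] at h1
  linarith

/-- Reachability. -/
def Reach {X : Type*} [MetricSpace X] (P : Finset X) (s : X) (ρ : X → ℝ) (p : X) : Prop :=
  ∃ (m : ℕ) (f : ℕ → X), f 0 = s ∧ f m = p ∧ (∀ i ≤ m, f i ∈ P) ∧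
    ∀ i < m, dist (f i) (f (i + 1)) ≤ ρ (f i)

lemma Reach.start {X : Type*} [MetricSpace X] {P : Finset X} {s : X} {ρ : X → ℝ} (hs : s ∈ P) :
    Reach P s ρ s :=
  ⟨0, fun _ => s, rfl, rfl, fun _ _ => hs, fun i hi => by omega⟩

lemma Reach.step {X : Type*} [MetricSpace X] {P : Finset X} {s : X} {ρ : X → ℝ} {p p' : X}
    (h : Reach P s ρ p) (hp : p' ∈ P) (hd : dist p p' ≤ ρ p) : Reach P s ρ p' := by
  obtain ⟨m, f, h0, hm, hP, hdist⟩ := h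
  refine ⟨m + 1, fun i => if i ≤ m then f i else p', by simp [h0], by simp, ?_, ?_⟩
  · intro i _
    dsimp only
    split_ifs with h
    · exact hP i h
    · exact hp
  · intro i hi
    dsimp only
    rw [if_pos (by omega : i ≤ m)]
    split_ifs with h
    · exact hdist i (by omega)
    · have : i = m := by omega
      subst this; rw [hm]; exact hd

lemma cut {X : Type*} [MetricSpace X] {P : Finset X} {s : X} {ρ : X → ℝ}
    (hf : Feasible P s ρ) (C : X → Prop) (hs : C s) {p : X} (hp : p ∈ P) (hC : ¬ C p) :
    ∃ u ∈ P, ∃ v ∈ P, C u ∧ ¬ C v ∧ dist u v ≤ ρ u := by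
  obtain ⟨m, f, h0, hm, hP, hd⟩ := hf.2 p hp
  by_contra hcon
  push Not at hcon
  have : ∀ i ≤ m, C (f i) := by
    intro i
    induction i with
    | zero => intro _; rwa [h0]
    | succ i ih =>
      intro hi
      by_contra hne
      have h1 := hcon (f i) (hP i (by omega)) (f (i + 1)) (hP _ hi) (ih (by omega)) hne
      have h2 := hd i (by omega)
      linarith
  exact hC (hm ▸ this m le_rfl)

lemma opt_le {X : Type*} [MetricSpace X] {P : Finset X} {s : X} {ρ : X → ℝ} (α : ℝ)
    (hf : Feasible P s ρ) : opt α P s ≤ cost α P ρ := by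
  refine csInf_le ⟨0, ?_⟩ ⟨ρ, hf, rfl⟩
  rintro c ⟨ρ', hf', rfl⟩
  exact Finset.sum_nonneg fun p hp => Real.rpow_nonneg (hf'.1 p hp) _

/-- The plane. -/
abbrev E2 := EuclideanSpace ℝ (Fin 2)

lemma dist_ge_coord (x y : E2) (i : Fin 2) : |x i - y i| ≤ dist x y := by
  rw [dist_eq_norm]
  simpa using PiLp.norm_apply_le (x - y) i

lemma dist_le_l1 (x y : E2) : dist x y ≤ |x 0 - y 0| + |x 1 - y 1| := by
  rw [EuclideanSpace.dist_eq, Fin.sum_univ_two, Real.dist_eq, Real.dist_eq]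
  apply Real.sqrt_le_iff.2
  constructor
  · positivity
  · nlinarith [abs_nonneg (x 0 - y 0), abs_nonneg (x 1 - y 1)]

/-- clamped arc length -/
def cl (m a k : ℕ) : ℕ := max (3 * a) (min (Gs k) (3 * m - 2 - 3 * a)) - 3 * a

/-- length of the closing part -/
def Qs (m a : ℕ) : ℕ := 3 * m - 2 - 6 * a

/-- y-coordinate -/
noncomputable def ys (m a : ℕ) (D1 D2 : ℝ) (k : ℕ) : ℝ :=
  D1 - (D1 + D2) * ((cl m a k : ℝ) / Qs m a)

/-- chain points -/
noncomputable def pt (m a : ℕ) (D1 D2 : ℝ) (k : ℕ) : E2 := !₂[(xs m a k : ℝ), ys m a D1 D2 k]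

/-- inserted point -/
noncomputable def qq (D2 : ℝ) : E2 := !₂[0, -(D2 / 2)]

/-- Parameter hypotheses. -/
structure Par (m a J : ℕ) (D1 D2 : ℝ) : Prop where
  h1 : 1 ≤ D1
  h12 : D1 ≤ D2
  ha : D1 + D2 ≤ 3 * a
  hQ : 3 * (D1 + D2) ≤ Qs m a
  hJ : D1 + D2 ≤ J

section geo
variable {m a J : ℕ} {D1 D2 : ℝ}

lemma Par.am (h : Par m a J D1 D2) : 4 * a + 3 ≤ 2 * m - 1 := by
  have h1 := h.h1; have h2 := h.h12; have h3 := h.hQ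
  have : (6 : ℝ) ≤ Qs m a := by linarith
  have : 6 ≤ Qs m a := by exact_mod_cast this
  unfold Qs at this; omega

lemma Par.Qpos (h : Par m a J D1 D2) : (0 : ℝ) < Qs m a := by
  have h1 := h.h1; have h2 := h.h12; have h3 := h.hQ
  linarith

lemma ys_up (k : ℕ) (hk : k ≤ 2 * a) : ys m a D1 D2 k = D1 := by
  have : cl m a k = 0 := by unfold cl Gs; omega
  unfold ys; rw [this]; simp

lemma ys_low (h : Par m a J D1 D2) (k : ℕ) (hk : 2 * m - 1 - 2 * a ≤ k) (hk2 : k < 2 * m) :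
    ys m a D1 D2 k = - D2 := by
  have := h.am
  have e : cl m a k = Qs m a := by unfold cl Gs Qs; omega
  unfold ys; rw [e, div_self h.Qpos.ne']; ring

lemma pt_x (k : ℕ) : pt m a D1 D2 k 0 = xs m a k := by simp [pt]
lemma pt_y (k : ℕ) : pt m a D1 D2 k 1 = ys m a D1 D2 k := by simp [pt]
lemma qq_x : qq D2 0 = 0 := by simp [qq]
lemma qq_y : qq D2 1 = -(D2 / 2) := by simp [qq]

lemma geo (h : Par m a J D1 D2) :
    Geo m a (D1 + D2) (fun u v => dist (pt m a D1 D2 u) (pt m a D1 D2 v)) where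
  hx u v _ _ := by
    have := dist_ge_coord (pt m a D1 D2 u) (pt m a D1 D2 v) 0
    rw [pt_x, pt_x] at this
    exact (le_abs_self _).trans this
  hH u v hu hv hv2 := by
    have := dist_ge_coord (pt m a D1 D2 u) (pt m a D1 D2 v) 1
    rw [pt_y, pt_y, ys_up u hu, ys_low h v hv hv2] at this
    have h2 := (le_abs_self _).trans this
    linarith
  symm u v := dist_comm _ _

lemma far_x (z : E2) (hz : z 0 = 0) (k : ℕ)
    (hk : (D1 + D2 : ℝ) ≤ xs m a k) : D1 + D2 ≤ dist z (pt m a D1 D2 k) := by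
  have := dist_ge_coord (pt m a D1 D2 k) z 0
  rw [pt_x, hz, dist_comm] at this
  have h2 := (le_abs_self _).trans this
  linarith

lemma xs_mid (h : Par m a J D1 D2) (k : ℕ) (hk1 : J ≤ k ∨ 2 * a ≤ k)
    (hk2 : J ≤ 2 * m - 1 - k ∨ 2 * a ≤ 2 * m - 1 - k) :
    (D1 + D2 : ℝ) ≤ xs m a k := by
  have : min J (3 * a) ≤ xs m a k := by unfold xs Gs; omega
  have h3 : ((min J (3 * a) : ℕ) : ℝ) ≤ xs m a k := by exact_mod_cast this
  have h1 := h.hJ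
  have h2 := h.ha
  have : D1 + D2 ≤ ((min J (3 * a) : ℕ) : ℝ) := by
    push_cast; exact le_min h1 h2
  linarith

lemma S2 (h : Par m a J D1 D2) (k : ℕ) (hk : k < 2 * m) (h3 : 2 * m - 1 - 2 * a ≤ k) :
    D2 ≤ dist (0 : E2) (pt m a D1 D2 k) := by
  have := dist_ge_coord (0 : E2) (pt m a D1 D2 k) 1
  rw [pt_y, ys_low h k h3 hk] at this
  have h2 := (le_abs_self _).trans this
  simpa using h2

lemma S1 (h : Par m a J D1 D2) (k : ℕ) (hk : k < 2 * m) : D1 ≤ dist (0 : E2) (pt m a D1 D2 k) := by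
  have h1 := h.h1; have h12 := h.h12
  by_cases h2 : k ≤ 2 * a
  · have := dist_ge_coord (pt m a D1 D2 k) 0 1
    rw [pt_y, ys_up k h2, dist_comm] at this
    have h2 := (le_abs_self _).trans this
    simpa using h2
  · by_cases h3 : 2 * m - 1 - 2 * a ≤ k
    · have := S2 h k hk h3
      linarith
    · have := far_x 0 (by simp) k (xs_mid h k (by omega) (by omega))
      linarith

lemma Q2 (k : ℕ) (h3 : k ≤ 2 * a) :
    D1 + D2 / 2 ≤ dist (qq D2) (pt m a D1 D2 k) := by
  have := dist_ge_coord (pt m a D1 D2 k) (qq D2) 1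
  rw [pt_y, qq_y, ys_up k h3, dist_comm] at this
  have h2 := (le_abs_self _).trans this
  linarith

lemma Q1 (h : Par m a J D1 D2) (k : ℕ) (hk : k < 2 * m) :
    D2 / 2 ≤ dist (qq D2) (pt m a D1 D2 k) := by
  have h1 := h.h1; have h12 := h.h12
  by_cases h2 : k ≤ 2 * a
  · have := Q2 (m := m) (D1 := D1) (D2 := D2) k h2; linarith
  · by_cases h3 : 2 * m - 1 - 2 * a ≤ k
    · have := dist_ge_coord (qq D2) (pt m a D1 D2 k) 1
      rw [pt_y, qq_y, ys_low h k h3 hk] at this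
      have h2 := (le_abs_self _).trans this
      linarith
    · have := far_x (qq D2) qq_x k (xs_mid h k (by omega) (by omega))
      linarith

lemma dist_s_q (h : Par m a J D1 D2) : dist (0 : E2) (qq D2) = D2 / 2 := by
  have h1 := h.h1; have h12 := h.h12
  apply le_antisymm
  · have := dist_le_l1 (0 : E2) (qq D2)
    rw [qq_x, qq_y] at this
    simpa [abs_of_nonneg (by linarith : 0 ≤ D2 / 2)] using this
  · have := (le_abs_self _).trans (dist_ge_coord (0 : E2) (qq D2) 1)
    rw [qq_y] at this
    simpa using this

lemma dist_s_pt (h : Par m a J D1 D2) : dist (0 : E2) (pt m a D1 D2 0) ≤ D1 := by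
  have h1 := h.h1
  have := dist_le_l1 (0 : E2) (pt m a D1 D2 0)
  have e : xs m a 0 = 0 := by unfold xs Gs; omega
  rw [pt_x, pt_y, ys_up 0 (by omega), e] at this
  simpa [abs_of_nonneg (by linarith : 0 ≤ D1)] using this

lemma dist_q_pt (h : Par m a J D1 D2) : dist (qq D2) (pt m a D1 D2 (2 * m - 1)) ≤ D2 / 2 := by
  have h1 := h.h1; have h12 := h.h12; have := h.am
  have hd := dist_le_l1 (qq D2) (pt m a D1 D2 (2 * m - 1))
  have e : xs m a (2 * m - 1) = 0 := by unfold xs Gs; omega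
  rw [pt_x, pt_y, ys_low h _ (by omega) (by omega), e, qq_x, qq_y] at hd
  have e2 : |-(D2 / 2) - -D2| = D2 / 2 := by
    rw [abs_of_nonneg (by linarith)]; ring
  rw [e2] at hd
  simpa using hd

lemma ys_diff (h : Par m a J D1 D2) (i j c : ℕ) (h1 : cl m a i ≤ cl m a j)
    (h2 : cl m a j ≤ cl m a i + c) :
    |ys m a D1 D2 i - ys m a D1 D2 j| ≤ c / 3 := by
  have hQ := h.Qpos; have hQ3 := h.hQ
  have hD := h.h1; have hD' := h.h12
  have e : ys m a D1 D2 i - ys m a D1 D2 j =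
      (D1 + D2) * (((cl m a j : ℝ) - cl m a i) / Qs m a) := by
    unfold ys; ring
  have a1 : (cl m a i : ℝ) ≤ cl m a j := by exact_mod_cast h1
  have a2 : (cl m a j : ℝ) ≤ cl m a i + c := by exact_mod_cast h2
  rw [e, abs_of_nonneg (mul_nonneg (by linarith) (div_nonneg (by linarith) hQ.le)),
    mul_div_assoc', div_le_div_iff₀ hQ (by norm_num)]
  nlinarith

lemma pt_consec (h : Par m a J D1 D2) (k : ℕ) (hk : k + 1 < 2 * m) :
    dist (pt m a D1 D2 k) (pt m a D1 D2 (k + 1)) ≤ gp k := by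
  have ham := h.am
  have hd := dist_le_l1 (pt m a D1 D2 k) (pt m a D1 D2 (k + 1))
  rw [pt_x, pt_x, pt_y, pt_y] at hd
  by_cases h2 : k + 1 ≤ 2 * a
  · rw [ys_up k (by omega), ys_up (k + 1) h2] at hd
    have e : xs m a (k + 1) = xs m a k + gp k := by unfold xs Gs gp; omega
    rw [e] at hd
    simpa using hd
  · by_cases h3 : 2 * m - 1 - 2 * a ≤ k
    · rw [ys_low h k h3 (by omega), ys_low h (k + 1) (by omega) hk] at hd
      have e : xs m a k = xs m a (k + 1) + gp k := by unfold xs Gs gp; omega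
      rw [e] at hd
      simpa using hd
    · have e : xs m a k = xs m a (k + 1) := by unfold xs Gs; omega
      rw [e] at hd
      have := ys_diff h k (k + 1) (gp k) (by unfold cl Gs; omega) (by unfold cl Gs gp; omega)
      have hg : (0 : ℝ) ≤ gp k := by positivity
      simp at hd
      linarith

lemma pt_skip (h : Par m a J D1 D2) :
    dist (pt m a D1 D2 (2 * a)) (pt m a D1 D2 (2 * a + 2)) ≤ 1 := by
  have ham := h.am
  have hd := dist_le_l1 (pt m a D1 D2 (2 * a)) (pt m a D1 D2 (2 * a + 2))
  rw [pt_x, pt_x, pt_y, pt_y] at hd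
  have e : xs m a (2 * a) = xs m a (2 * a + 2) := by unfold xs Gs; omega
  rw [e] at hd
  have := ys_diff h (2 * a) (2 * a + 2) 3 (by unfold cl Gs; omega) (by unfold cl Gs; omega)
  simp at hd
  norm_num at this
  linarith

lemma pt_ne (h : Par m a J D1 D2) (i j : ℕ) (hij : i < j) (hj : j < 2 * m) :
    pt m a D1 D2 i ≠ pt m a D1 D2 j := by
  intro heq
  have ham := h.am
  have hD := h.h1; have hD' := h.h12
  have hx : xs m a i = xs m a j := by
    have := congrArg (fun z : E2 => z 0) heq
    simp only [pt_x] at this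
    exact_mod_cast this
  have hy : cl m a i = cl m a j := by
    have := congrArg (fun z : E2 => z 1) heq
    simp only [pt_y, ys] at this
    have h2 : (D1 + D2) * ((cl m a i : ℝ) / Qs m a) = (D1 + D2) * ((cl m a j : ℝ) / Qs m a) := by
      linarith
    have h3 := mul_left_cancel₀ (by linarith : D1 + D2 ≠ 0) h2
    have h4 := (div_left_inj' h.Qpos.ne').1 h3
    exact_mod_cast h4
  unfold xs Gs at hx
  unfold cl Gs at hy
  omega

lemma pt_injOn (h : Par m a J D1 D2) : Set.InjOn (pt m a D1 D2) {k | k < 2 * m} := by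
  intro i hi j hj hij
  rcases lt_trichotomy i j with h1 | h1 | h1
  · exact absurd hij (pt_ne h i j h1 hj)
  · exact h1
  · exact absurd hij.symm (pt_ne h j i h1 hi)

end geo

section main
variable {m a J : ℕ} {D1 D2 : ℝ}

/-- index set of the chain (one closing point is omitted) -/
def Is (m a : ℕ) : Finset ℕ := (range (2 * m)).erase (2 * a + 1)

lemma mem_Is {k : ℕ} : k ∈ Is m a ↔ k ≠ 2 * a + 1 ∧ k < 2 * m := by simp [Is]

/-- The instance. -/
noncomputable def PP (m a : ℕ) (D1 D2 : ℝ) : Finset E2 := insert 0 ((Is m a).image (pt m a D1 D2))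

lemma mem_PP {z : E2} : z ∈ PP m a D1 D2 ↔ z = 0 ∨ ∃ k ∈ Is m a, pt m a D1 D2 k = z := by
  simp [PP]

/-- ranges along the chain -/
noncomputable def rr (m a : ℕ) (D1 D2 : ℝ) (ρ : E2 → ℝ) (k : ℕ) : ℝ :=
  if k ∈ Is m a then ρ (pt m a D1 D2 k) else 0

lemma pt_ne_zero (h : Par m a J D1 D2) (k : ℕ) (hk : k < 2 * m) : pt m a D1 D2 k ≠ 0 := by
  intro he
  have h1 := S1 h k hk
  rw [he, dist_self] at h1
  have := h.h1; linarith

lemma pt_ne_qq (h : Par m a J D1 D2) (k : ℕ) (hk : k < 2 * m) : pt m a D1 D2 k ≠ qq D2 := by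
  intro he
  have h1 := Q1 h k hk
  rw [he, dist_self] at h1
  have := h.h1; have := h.h12; linarith

lemma qq_ne_zero (h : Par m a J D1 D2) : qq D2 ≠ 0 := by
  intro he
  have h1 := dist_s_q h
  rw [he, dist_self] at h1
  have := h.h1; have := h.h12; linarith

lemma qq_notMem (h : Par m a J D1 D2) : qq D2 ∉ PP m a D1 D2 := by
  rw [mem_PP]
  rintro (h1 | ⟨k, hk, h1⟩)
  · exact qq_ne_zero h h1
  · exact pt_ne_qq h k (mem_Is.1 hk).2 h1

lemma zero_notMem (h : Par m a J D1 D2) : (0 : E2) ∉ (Is m a).image (pt m a D1 D2) := by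
  intro hm
  obtain ⟨k, hk, h1⟩ := Finset.mem_image.1 hm
  exact pt_ne_zero h k (mem_Is.1 hk).2 h1

lemma injOn_Is (h : Par m a J D1 D2) : Set.InjOn (pt m a D1 D2) (Is m a) := by
  intro i hi j hj hij
  exact pt_injOn h (mem_Is.1 hi).2 (mem_Is.1 hj).2 hij

lemma card_PP (h : Par m a J D1 D2) : (PP m a D1 D2).card = 2 * m := by
  have := h.am
  unfold PP
  rw [Finset.card_insert_of_notMem (zero_notMem h), Finset.card_image_of_injOn (injOn_Is h)]
  unfold Is
  rw [Finset.card_erase_of_mem (by rw [Finset.mem_range]; omega), Finset.card_range]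
  omega

lemma cost_PP {α : ℝ} (hα : 1 < α) (h : Par m a J D1 D2) (ρ : E2 → ℝ) :
    cost α (PP m a D1 D2) ρ = ρ 0 ^ α + ∑ k ∈ range (2 * m), rr m a D1 D2 ρ k ^ α := by
  have ham := h.am
  unfold cost PP
  rw [Finset.sum_insert (zero_notMem h), Finset.sum_image (injOn_Is h)]
  congr 1
  have hmem : 2 * a + 1 ∈ range (2 * m) := by rw [Finset.mem_range]; omega
  rw [← Finset.sum_erase_add _ _ hmem]
  have e : rr m a D1 D2 ρ (2 * a + 1) = 0 := by
    unfold rr; rw [if_neg]; simp [mem_Is]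
  rw [e, Real.zero_rpow (by linarith), add_zero]
  refine Finset.sum_congr rfl fun k hk => ?_
  unfold rr; rw [if_pos (show k ∈ Is m a from hk)]

lemma cost_PPq {α : ℝ} (hα : 1 < α) (h : Par m a J D1 D2) (ρ : E2 → ℝ) :
    cost α (insert (qq D2) (PP m a D1 D2)) ρ =
      ρ (qq D2) ^ α + (ρ 0 ^ α + ∑ k ∈ range (2 * m), rr m a D1 D2 ρ k ^ α) := by
  rw [← cost_PP hα h]
  unfold cost
  rw [Finset.sum_insert (qq_notMem h)]

lemma two_sided_geo {α : ℝ} (hα : 1 < α) (h : Par m a J D1 D2) (S : Finset E2) (ρ : E2 → ℝ)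
    (hS : ∀ z ∈ S, z 0 = 0 ∨ ∃ k ∈ Is m a, pt m a D1 D2 k = z)
    (hS' : ∀ k ∈ Is m a, pt m a D1 D2 k ∈ S)
    (hf : Feasible S 0 ρ) (hρ : ∀ z ∈ S, ρ z < D1 + D2) :
    (m : ℝ) * (1 + 2 ^ α) - 2 ^ α * (Ls m a J + 2) ≤
      ∑ k ∈ range (2 * m), rr m a D1 D2 ρ k ^ α := by
  have ham := h.am
  have h1 := h.h1; have h12 := h.h12
  refine two_sided hα (geo h) (by omega) ?_ ?_ ?_
  · intro u; unfold rr; split_ifs with hu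
    · exact hf.1 _ (hS' u hu)
    · exact le_rfl
  · intro u; unfold rr; split_ifs with hu
    · exact hρ _ (hS' u hu)
    · linarith
  · intro j j' hj hjj hj'
    simp only [Vs, Finset.mem_filter, Finset.mem_range] at hj'
    have hj'I : j' ∈ Is m a := by rw [mem_Is]; omega
    obtain ⟨u, hu, v, hv, hC, hnC, hd⟩ := cut hf
      (fun z => ¬ ∃ k ∈ Is m a, j < k ∧ k ≤ j' ∧ pt m a D1 D2 k = z)
      (by
        rintro ⟨k, hk, _, _, h0⟩
        exact pt_ne_zero h k (mem_Is.1 hk).2 h0)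
      (hS' j' hj'I) (by
        rw [not_not]; exact ⟨j', hj'I, hjj, le_rfl, rfl⟩)
    rw [not_not] at hnC
    obtain ⟨k, hk, hk1, hk2, rfl⟩ := hnC
    rcases hS u hu with h0 | ⟨i, hi, rfl⟩
    · exfalso
      have := far_x u h0 k (xs_mid h k (by omega) (by omega))
      have := hρ u hu
      linarith
    · have hr : dist (pt m a D1 D2 i) (pt m a D1 D2 k) ≤ rr m a D1 D2 ρ i := by
        unfold rr; rwa [if_pos hi]
      by_cases hij : i ≤ j
      · exact Or.inl ⟨i, k, hij, hk1, (mem_Is.1 hk).2, hr⟩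
      · by_cases hij' : i ≤ j'
        · exact absurd ⟨i, hi, by omega, hij', rfl⟩ hC
        · exact Or.inr ⟨i, k, hk2, by omega, (mem_Is.1 hi).2, hr⟩

lemma lt_of_cost {α B H : ℝ} (hα : 1 < α) {S : Finset E2} {ρ : E2 → ℝ} (hH : 0 ≤ H)
    (h0 : ∀ z ∈ S, 0 ≤ ρ z) (hc : cost α S ρ ≤ B) (hB : B < H ^ α) (z : E2) (hz : z ∈ S) :
    ρ z < H := by
  by_contra hne
  push Not at hne
  have h1 : H ^ α ≤ ρ z ^ α := Real.rpow_le_rpow hH hne (by linarith)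
  have h2 : ρ z ^ α ≤ cost α S ρ :=
    Finset.single_le_sum (f := fun p => ρ p ^ α) (fun p hp => Real.rpow_nonneg (h0 p hp) _) hz
  linarith

lemma analysis1 {α M B : ℝ} (hα : 1 < α) (hM : 0 ≤ M) (hM1 : M ≤ 2 ^ α - 1)
    (hM2 : 2 * M ≤ 3 ^ α - 2 ^ α - 1) (h : Par m a J D1 D2) (ρ : E2 → ℝ)
    (hf : Feasible (PP m a D1 D2) 0 ρ) (hc : cost α (PP m a D1 D2) ρ ≤ B)
    (hB : B < (D1 + D2) ^ α)
    (hB2 : B < D2 ^ α + ((m : ℝ) * (1 + 2 ^ α) - 2 ^ α * (Ls m a J + 2))) :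
    M * (abn m (rr m a D1 D2 ρ)).card ≤
      B - D1 ^ α - (m : ℝ) * (1 + 2 ^ α) + 4 * 2 ^ α * (Ls m a J + 1) := by
  have ham := h.am
  have h1 := h.h1; have h12 := h.h12
  have hlt := lt_of_cost hα (by linarith : 0 ≤ D1 + D2) hf.1 hc hB
  have hmemI : ∀ k ∈ Is m a, pt m a D1 D2 k ∈ PP m a D1 D2 := fun k hk =>
    mem_PP.2 (Or.inr ⟨k, hk, rfl⟩)
  have h0P : (0 : E2) ∈ PP m a D1 D2 := mem_PP.2 (Or.inl rfl)
  have hts := two_sided_geo hα h _ ρ (fun z hz => by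
    rcases mem_PP.1 hz with rfl | h2
    · left; simp
    · exact Or.inr h2) hmemI hf hlt
  rw [cost_PP hα h] at hc
  have hs2 : ρ 0 < D2 := by
    by_contra hne
    push Not at hne
    have : D2 ^ α ≤ ρ 0 ^ α := Real.rpow_le_rpow (by linarith) hne (by linarith)
    linarith
  have h0I : 0 ∈ Is m a := by rw [mem_Is]; omega
  have hs1 : D1 ≤ ρ 0 := by
    obtain ⟨u, hu, v, hv, hC, hnC, hd⟩ := cut hf (fun z => z = 0) rfl (hmemI 0 h0I)
      (pt_ne_zero h 0 (by omega))
    rcases mem_PP.1 hv with rfl | ⟨k, hk, rfl⟩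
    · exact absurd rfl hnC
    · have hC' : u = 0 := hC
      subst hC'
      exact (S1 h k (mem_Is.1 hk).2).trans hd
  have hs1' : D1 ^ α ≤ ρ 0 ^ α := Real.rpow_le_rpow (by linarith) hs1 (by linarith)
  have hfb := fwd_bound hα hM hM1 hM2 (J := J) (geo h) (by omega) (r := rr m a D1 D2 ρ) (by
      intro u; unfold rr; split_ifs with hu
      · exact hf.1 _ (hmemI u hu)
      · exact le_rfl) (by
      intro u; unfold rr; split_ifs with hu
      · exact hlt _ (hmemI u hu)
      · linarith) (by
      intro j hj
      simp only [Vs, Finset.mem_filter, Finset.mem_range] at hj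
      have hNI : 2 * m - 1 ∈ Is m a := by rw [mem_Is]; omega
      obtain ⟨u, hu, v, hv, hC, hnC, hd⟩ := cut hf
        (fun z => ¬ ∃ k ∈ Is m a, j < k ∧ pt m a D1 D2 k = z)
        (by
          rintro ⟨k, hk, _, h0⟩
          exact pt_ne_zero h k (mem_Is.1 hk).2 h0)
        (hmemI _ hNI) (by
          rw [not_not]; exact ⟨_, hNI, by omega, rfl⟩)
      rw [not_not] at hnC
      obtain ⟨k, hk, hk1, rfl⟩ := hnC
      rcases mem_PP.1 hu with rfl | ⟨i, hi, rfl⟩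
      · exfalso
        by_cases hkl : 2 * m - 1 - 2 * a ≤ k
        · have := S2 h k (mem_Is.1 hk).2 hkl; linarith
        · have := far_x (0 : E2) (by simp) k (xs_mid h k (by omega) (by omega))
          linarith
      · refine ⟨i, k, ?_, hk1, (mem_Is.1 hk).2, ?_⟩
        · by_contra hne
          exact hC ⟨i, hi, by omega, rfl⟩
        · unfold rr; rwa [if_pos hi])
  linarith

lemma analysis2 {α M B : ℝ} (hα : 1 < α) (hM : 0 ≤ M) (hM1 : M ≤ 2 ^ α - 1)
    (hM2 : 2 * M ≤ 3 ^ α - 2 ^ α - 1) (h : Par m a J D1 D2) (ρ : E2 → ℝ)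
    (hf : Feasible (insert (qq D2) (PP m a D1 D2)) 0 ρ)
    (hc : cost α (insert (qq D2) (PP m a D1 D2)) ρ ≤ B)
    (hB : B < (D1 + D2) ^ α)
    (hB2 : B < D1 ^ α + ((m : ℝ) * (1 + 2 ^ α) - 2 ^ α * (Ls m a J + 2))) :
    M * (abn' m (rr m a D1 D2 ρ)).card ≤
      B - 2 * (D2 / 2) ^ α - (m : ℝ) * (1 + 2 ^ α) + 4 * 2 ^ α * (Ls m a J + 1) := by
  have ham := h.am
  have h1 := h.h1; have h12 := h.h12
  have hlt := lt_of_cost hα (by linarith : 0 ≤ D1 + D2) hf.1 hc hB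
  have hmemS : ∀ z, z ∈ insert (qq D2) (PP m a D1 D2) ↔
      z = qq D2 ∨ z = 0 ∨ ∃ k ∈ Is m a, pt m a D1 D2 k = z := by
    intro z; rw [Finset.mem_insert, mem_PP]
  have hmemI : ∀ k ∈ Is m a, pt m a D1 D2 k ∈ insert (qq D2) (PP m a D1 D2) := fun k hk =>
    (hmemS _).2 (Or.inr (Or.inr ⟨k, hk, rfl⟩))
  have h0P : (0 : E2) ∈ insert (qq D2) (PP m a D1 D2) := (hmemS _).2 (Or.inr (Or.inl rfl))
  have hqP : qq D2 ∈ insert (qq D2) (PP m a D1 D2) := (hmemS _).2 (Or.inl rfl)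
  have hts := two_sided_geo hα h _ ρ (fun z hz => by
    rcases (hmemS z).1 hz with rfl | rfl | h2
    · left; exact qq_x
    · left; simp
    · exact Or.inr h2) hmemI hf hlt
  rw [cost_PPq hα h] at hc
  have hq0 : 0 ≤ ρ (qq D2) ^ α := Real.rpow_nonneg (hf.1 _ hqP) _
  have hz0 : 0 ≤ ρ 0 ^ α := Real.rpow_nonneg (hf.1 _ h0P) _
  have hs2 : ρ 0 < D1 := by
    by_contra hne
    push Not at hne
    have : D1 ^ α ≤ ρ 0 ^ α := Real.rpow_le_rpow (by linarith) hne (by linarith)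
    linarith
  have hq2 : ρ (qq D2) < D1 := by
    by_contra hne
    push Not at hne
    have : D1 ^ α ≤ ρ (qq D2) ^ α := Real.rpow_le_rpow (by linarith) hne (by linarith)
    linarith
  have h0I : 0 ∈ Is m a := by rw [mem_Is]; omega
  have hs1 : D2 / 2 ≤ ρ 0 := by
    obtain ⟨u, hu, v, hv, hC, hnC, hd⟩ := cut hf (fun z => z = 0) rfl (hmemI 0 h0I)
      (pt_ne_zero h 0 (by omega))
    have hC' : u = 0 := hC
    subst hC'
    rcases (hmemS v).1 hv with rfl | rfl | ⟨k, hk, rfl⟩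
    · rwa [dist_s_q h] at hd
    · exact absurd rfl hnC
    · have := S1 h k (mem_Is.1 hk).2; linarith
  have hq1 : D2 / 2 ≤ ρ (qq D2) := by
    obtain ⟨u, hu, v, hv, hC, hnC, hd⟩ := cut hf (fun z => z = 0 ∨ z = qq D2) (Or.inl rfl)
      (hmemI 0 h0I) (by
        rintro (h2 | h2)
        · exact pt_ne_zero h 0 (by omega) h2
        · exact pt_ne_qq h 0 (by omega) h2)
    rcases (hmemS v).1 hv with rfl | rfl | ⟨k, hk, rfl⟩
    · exact absurd (Or.inr rfl) hnC
    · exact absurd (Or.inl rfl) hnC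
    · rcases hC with rfl | rfl
      · have := S1 h k (mem_Is.1 hk).2; linarith
      · exact (Q1 h k (mem_Is.1 hk).2).trans hd
  have hs1' : (D2 / 2) ^ α ≤ ρ 0 ^ α := Real.rpow_le_rpow (by linarith) hs1 (by linarith)
  have hq1' : (D2 / 2) ^ α ≤ ρ (qq D2) ^ α := Real.rpow_le_rpow (by linarith) hq1 (by linarith)
  have hfb := bwd_bound hα hM hM1 hM2 (J := J) (geo h) (by omega) (r := rr m a D1 D2 ρ) (by
      intro u; unfold rr; split_ifs with hu
      · exact hf.1 _ (hmemI u hu)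
      · exact le_rfl) (by
      intro u; unfold rr; split_ifs with hu
      · exact hlt _ (hmemI u hu)
      · linarith) (by
      intro j hj
      simp only [Vs, Finset.mem_filter, Finset.mem_range] at hj
      obtain ⟨u, hu, v, hv, hC, hnC, hd⟩ := cut hf
        (fun z => ¬ ∃ k ∈ Is m a, k ≤ j ∧ pt m a D1 D2 k = z)
        (by
          rintro ⟨k, hk, _, h0⟩
          exact pt_ne_zero h k (mem_Is.1 hk).2 h0)
        (hmemI _ h0I) (by
          rw [not_not]; exact ⟨_, h0I, by omega, rfl⟩)
      rw [not_not] at hnC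
      obtain ⟨k, hk, hk1, rfl⟩ := hnC
      rcases (hmemS u).1 hu with rfl | rfl | ⟨i, hi, rfl⟩
      · exfalso
        by_cases hkl : k ≤ 2 * a
        · have := Q2 (m := m) (D1 := D1) (D2 := D2) k hkl; linarith
        · have := far_x (qq D2) qq_x k (xs_mid h k (by omega) (by omega))
          linarith
      · exfalso
        have := S1 h k (mem_Is.1 hk).2; linarith
      · refine ⟨i, k, hk1, ?_, (mem_Is.1 hi).2, ?_⟩
        · by_contra hne
          exact hC ⟨i, hi, by omega, rfl⟩
        · unfold rr; rwa [if_pos hi])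
  linarith

/-- index of a chain point -/
noncomputable def idx (m a : ℕ) (D1 D2 : ℝ) (z : E2) : ℕ :=
  Function.invFunOn (pt m a D1 D2) {k | k < 2 * m} z

lemma idx_pt (h : Par m a J D1 D2) (k : ℕ) (hk : k < 2 * m) :
    idx m a D1 D2 (pt m a D1 D2 k) = k :=
  (pt_injOn h).leftInvOn_invFunOn hk

lemma sum_gp {α : ℝ} (m c : ℕ) :
    ∑ k ∈ range (2 * m), (gp (k + c) : ℝ) ^ α = m * (1 + 2 ^ α) := by
  have := sum_pairs (2 ^ α) 0 c m
  rw [add_zero, add_comm c, Finset.sum_Ico_eq_sum_range] at this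
  simp only [Nat.add_sub_cancel] at this
  rw [← this]
  refine Finset.sum_congr rfl fun k _ => ?_
  rw [add_comm c k]
  unfold gp ppi
  rcases Nat.mod_two_eq_zero_or_one (k + c) with h | h <;> simp [h]

lemma opt1 {α : ℝ} (hα : 1 < α) (h : Par m a J D1 D2) :
    opt α (PP m a D1 D2) 0 ≤ D1 ^ α + m * (1 + 2 ^ α) := by
  have ham := h.am
  have h1 := h.h1; have h12 := h.h12
  let ρ : E2 → ℝ := fun z => if z = 0 then D1 else gp (idx m a D1 D2 z)
  have hρ0 : ρ 0 = D1 := by simp [ρ]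
  have hρk : ∀ k, k < 2 * m → ρ (pt m a D1 D2 k) = gp k := by
    intro k hk
    simp only [ρ, if_neg (pt_ne_zero h k hk), idx_pt h k hk]
  have hf : Feasible (PP m a D1 D2) 0 ρ := by
    have hmemI : ∀ k ∈ Is m a, pt m a D1 D2 k ∈ PP m a D1 D2 := fun k hk =>
      mem_PP.2 (Or.inr ⟨k, hk, rfl⟩)
    refine ⟨fun z _ => ?_, ?_⟩
    · simp only [ρ]; split_ifs
      · linarith
      · positivity
    have h0 : Reach (PP m a D1 D2) 0 ρ 0 := Reach.start (mem_PP.2 (Or.inl rfl))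
    have hr : ∀ k, k ∈ Is m a → Reach (PP m a D1 D2) 0 ρ (pt m a D1 D2 k) := by
      intro k
      induction k using Nat.strong_induction_on with
      | _ k ih =>
        intro hk
        have hk' := mem_Is.1 hk
        rcases Nat.eq_zero_or_pos k with rfl | hpos
        · exact h0.step (hmemI _ hk) (by rw [hρ0]; exact dist_s_pt h)
        · by_cases he : k = 2 * a + 2
          · subst he
            have hI : 2 * a ∈ Is m a := by rw [mem_Is]; omega
            refine (ih (2 * a) (by omega) hI).step (hmemI _ hk) ?_
            rw [hρk _ (by omega)]
            refine (pt_skip h).trans ?_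
            have : 1 ≤ gp (2 * a) := by unfold gp; omega
            exact_mod_cast this
          · have hI : k - 1 ∈ Is m a := by rw [mem_Is]; omega
            refine (ih (k - 1) (by omega) hI).step (hmemI _ hk) ?_
            rw [hρk _ (by omega)]
            have := pt_consec h (k - 1) (by omega)
            rwa [Nat.sub_add_cancel hpos] at this
    intro z hz
    rcases mem_PP.1 hz with rfl | ⟨k, hk, rfl⟩
    · exact h0
    · exact hr k hk
  refine (opt_le α hf).trans ?_
  rw [cost_PP hα h, hρ0, ← sum_gp m 0]
  gcongr with k hk
  · unfold rr; split_ifs with hk'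
    · rw [hρk _ (mem_Is.1 hk').2]; positivity
    · exact le_rfl
  · unfold rr; split_ifs with hk'
    · rw [hρk _ (mem_Is.1 hk').2]; simp
    · positivity

lemma opt2 {α : ℝ} (hα : 1 < α) (h : Par m a J D1 D2) :
    opt α (insert (qq D2) (PP m a D1 D2)) 0 ≤ 2 * (D2 / 2) ^ α + m * (1 + 2 ^ α) := by
  have ham := h.am
  have h1 := h.h1; have h12 := h.h12
  let ρ : E2 → ℝ := fun z => if z = 0 ∨ z = qq D2 then D2 / 2 else gp (idx m a D1 D2 z + 1)
  have hρ0 : ρ 0 = D2 / 2 := by simp [ρ]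
  have hρq : ρ (qq D2) = D2 / 2 := by simp [ρ]
  have hρk : ∀ k, k < 2 * m → ρ (pt m a D1 D2 k) = gp (k + 1) := by
    intro k hk
    have : ¬ (pt m a D1 D2 k = 0 ∨ pt m a D1 D2 k = qq D2) := by
      rintro (h2 | h2)
      · exact pt_ne_zero h k hk h2
      · exact pt_ne_qq h k hk h2
    simp only [ρ, if_neg this, idx_pt h k hk]
  have hf : Feasible (insert (qq D2) (PP m a D1 D2)) 0 ρ := by
    have hmemS : ∀ z, z ∈ insert (qq D2) (PP m a D1 D2) ↔
        z = qq D2 ∨ z = 0 ∨ ∃ k ∈ Is m a, pt m a D1 D2 k = z := by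
      intro z; rw [Finset.mem_insert, mem_PP]
    have hmemI : ∀ k ∈ Is m a, pt m a D1 D2 k ∈ insert (qq D2) (PP m a D1 D2) := fun k hk =>
      (hmemS _).2 (Or.inr (Or.inr ⟨k, hk, rfl⟩))
    refine ⟨fun z _ => ?_, ?_⟩
    · simp only [ρ]; split_ifs
      · linarith
      · positivity
    have h0 : Reach (insert (qq D2) (PP m a D1 D2)) 0 ρ 0 :=
      Reach.start ((hmemS _).2 (Or.inr (Or.inl rfl)))
    have hq : Reach (insert (qq D2) (PP m a D1 D2)) 0 ρ (qq D2) :=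
      h0.step ((hmemS _).2 (Or.inl rfl)) (by rw [hρ0, dist_s_q h])
    have hr : ∀ i k, k + i = 2 * m - 1 → k ∈ Is m a →
        Reach (insert (qq D2) (PP m a D1 D2)) 0 ρ (pt m a D1 D2 k) := by
      intro i
      induction i using Nat.strong_induction_on with
      | _ i ih =>
        intro k hki hk
        have hk' := mem_Is.1 hk
        rcases Nat.eq_zero_or_pos i with rfl | hpos
        · have : k = 2 * m - 1 := by omega
          subst this
          exact hq.step (hmemI _ hk) (by rw [hρq]; exact dist_q_pt h)
        · by_cases he : k = 2 * a
          · subst he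
            have hI : 2 * a + 2 ∈ Is m a := by rw [mem_Is]; omega
            refine (ih (i - 2) (by omega) (2 * a + 2) (by omega) hI).step (hmemI _ hk) ?_
            rw [hρk _ (by omega), dist_comm]
            refine (pt_skip h).trans ?_
            have : 1 ≤ gp (2 * a + 2 + 1) := by unfold gp; omega
            exact_mod_cast this
          · have hI : k + 1 ∈ Is m a := by rw [mem_Is]; omega
            refine (ih (i - 1) (by omega) (k + 1) (by omega) hI).step (hmemI _ hk) ?_
            rw [hρk _ (by omega), dist_comm]
            have e : gp (k + 1 + 1) = gp k := by unfold gp; omega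
            rw [e]
            exact pt_consec h k (by omega)
    intro z hz
    rcases (hmemS z).1 hz with rfl | rfl | ⟨k, hk, rfl⟩
    · exact hq
    · exact h0
    · exact hr (2 * m - 1 - k) k (by have := (mem_Is.1 hk).2; omega) hk
  refine (opt_le α hf).trans ?_
  rw [cost_PPq hα h, hρ0, hρq, ← sum_gp m 1]
  have : ∑ k ∈ range (2 * m), rr m a D1 D2 ρ k ^ α ≤
      ∑ k ∈ range (2 * m), (gp (k + 1) : ℝ) ^ α := by
    gcongr with k hk
    · unfold rr; split_ifs with hk'
      · rw [hρk _ (mem_Is.1 hk').2]; positivity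
      · exact le_rfl
    · unfold rr; split_ifs with hk'
      · rw [hρk _ (mem_Is.1 hk').2]
      · positivity
  linarith

lemma count_changed (h : Par m a J D1 D2) (ρ ρ' : E2 → ℝ) :
    (2 * m : ℝ) - 1 - (abn m (rr m a D1 D2 ρ)).card - (abn' m (rr m a D1 D2 ρ')).card ≤
      (({p ∈ insert (qq D2) (PP m a D1 D2 : Set E2) |
        ρ' p ≠ Function.update ρ (qq D2) 0 p}.ncard : ℝ)) := by
  have ham := h.am
  set T := {p ∈ insert (qq D2) (PP m a D1 D2 : Set E2) |
        ρ' p ≠ Function.update ρ (qq D2) 0 p} with hT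
  set K := (Is m a) \ (abn m (rr m a D1 D2 ρ) ∪ abn' m (rr m a D1 D2 ρ')) with hK
  have hfin : T.Finite := by
    refine Set.Finite.subset ((insert (qq D2) (PP m a D1 D2)).finite_toSet) ?_
    intro z hz
    have := hz.1
    simpa using this
  have hsub : ((K.image (pt m a D1 D2) : Finset E2) : Set E2) ⊆ T := by
    intro z hz
    rw [Finset.mem_coe, Finset.mem_image] at hz
    obtain ⟨k, hk, rfl⟩ := hz
    rw [hK, Finset.mem_sdiff, Finset.mem_union] at hk
    obtain ⟨hkI, hk2⟩ := hk
    have hk' := mem_Is.1 hkI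
    refine ⟨Set.mem_insert_of_mem _ (Finset.mem_coe.2 (mem_PP.2 (Or.inr ⟨k, hkI, rfl⟩))), ?_⟩
    rw [Function.update_of_ne (pt_ne_qq h k hk'.2)]
    intro heq
    apply hk2
    have e1 : rr m a D1 D2 ρ k = ρ (pt m a D1 D2 k) := by unfold rr; rw [if_pos hkI]
    have e2 : rr m a D1 D2 ρ' k = ρ (pt m a D1 D2 k) := by unfold rr; rw [if_pos hkI, heq]
    unfold abn abn'
    rw [Finset.mem_filter, Finset.mem_filter, Finset.mem_range, e1, e2]
    rcases Nat.mod_two_eq_zero_or_one k with h2 | h2 <;>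
      rcases le_or_gt 2 (ρ (pt m a D1 D2 k)) with h3 | h3 <;> simp [h2, h3, hk'.2]
  have h1 := Set.ncard_le_ncard hsub hfin
  rw [Set.ncard_coe_finset, Finset.card_image_of_injOn
    ((injOn_Is h).mono (by intro k hk; exact (Finset.mem_sdiff.1 hk).1))] at h1
  have h2 := Finset.le_card_sdiff (abn m (rr m a D1 D2 ρ) ∪ abn' m (rr m a D1 D2 ρ')) (Is m a)
  have h3 := Finset.card_union_le (abn m (rr m a D1 D2 ρ)) (abn' m (rr m a D1 D2 ρ'))
  have h4 : (Is m a).card = 2 * m - 1 := by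
    unfold Is
    rw [Finset.card_erase_of_mem (by rw [Finset.mem_range]; omega), Finset.card_range]
  have h5 : 2 * m ≤ T.ncard + 1 + (abn m (rr m a D1 D2 ρ)).card +
      (abn' m (rr m a D1 D2 ρ')).card := by
    rw [← hK] at h2; omega
  have h6 : (2 * m : ℝ) ≤ T.ncard + 1 + (abn m (rr m a D1 D2 ρ)).card +
      (abn' m (rr m a D1 D2 ρ')).card := by exact_mod_cast h5
  linarith

end main

section final

lemma consts {α : ℝ} (hα : 1 < α) :
    1 < (2 : ℝ) ^ (α - 1) ∧ (2 : ℝ) ^ α = 2 * 2 ^ (α - 1) ∧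
    (2 : ℝ) ^ (α - 4) = 2 ^ (α - 1) / 8 ∧
    (2 : ℝ) ^ α + 1 < 3 ^ α ∧ (2 : ℝ) ^ α + 2 < 4 ^ α := by
  have hb : 1 < (2 : ℝ) ^ (α - 1) := Real.one_lt_rpow (by norm_num) (by linarith)
  have h2 : (2 : ℝ) ^ α = 2 * 2 ^ (α - 1) := by
    rw [Real.rpow_sub_one (by norm_num)]; ring
  have h3 : (3 : ℝ) ^ α = 3 * 3 ^ (α - 1) := by
    rw [Real.rpow_sub_one (by norm_num)]; ring
  have h32 : (2 : ℝ) ^ (α - 1) ≤ 3 ^ (α - 1) :=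
    Real.rpow_le_rpow (by norm_num) (by norm_num) (by linarith)
  have h34 : (3 : ℝ) ^ α ≤ 4 ^ α := Real.rpow_le_rpow (by norm_num) (by norm_num) (by linarith)
  have h4 : (4 : ℝ) ^ α = 2 ^ α * 2 ^ α := by
    rw [← Real.mul_rpow (by norm_num) (by norm_num)]; norm_num
  refine ⟨hb, h2, ?_, by linarith, by nlinarith⟩
  rw [show α - 4 = (α - 1) - (3 : ℕ) by push_cast; ring, Real.rpow_sub_natCast (by norm_num)]
  norm_num

/-- The constant `M` in the definition of `cAlpha`. -/
noncomputable def MM (α : ℝ) : ℝ :=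
  min (2 ^ α - 1) (min ((3 ^ α - 2 ^ α - 1) / 2) ((4 ^ α - 2 ^ α - 2) / 3))

lemma MM_pos {α : ℝ} (hα : 1 < α) : 0 < MM α := by
  obtain ⟨hb, h2, h8, h3, h4⟩ := consts hα
  unfold MM
  refine lt_min (by linarith) (lt_min (by linarith) (by linarith))

lemma cAlpha_facts {α : ℝ} (hα : 1 < α) :
    1 < cAlpha α ∧ 8 * (cAlpha α - 1) ≤ 2 ^ (α - 1) - 1 ∧ 6 * (cAlpha α - 1) ≤ 1 ∧
    4 * (1 + 2 ^ α) * (cAlpha α - 1) ≤ MM α := by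
  obtain ⟨hb, h2, h8, h3, h4⟩ := consts hα
  have hM := MM_pos hα
  have hA : 1 + (2 : ℝ) ^ (α - 4) - 1 / 8 = 1 + (2 ^ (α - 1) - 1) / 8 := by rw [h8]; ring
  have c1 : cAlpha α ≤ 1 + (2 ^ (α - 1) - 1) / 8 := hA ▸ min_le_left _ _
  have c2 : cAlpha α ≤ 1 + (2 ^ (α - 1) - 1) / (3 * 2 ^ α + 2) :=
    (min_le_right _ _).trans (min_le_left _ _)
  have c3 : cAlpha α ≤ 1 + MM α / (4 * (2 ^ α + 1)) :=
    (min_le_right _ _).trans (min_le_right _ _)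
  have hp2 : 0 < 3 * (2 : ℝ) ^ α + 2 := by linarith
  have hp3 : 0 < 4 * ((2 : ℝ) ^ α + 1) := by linarith
  refine ⟨?_, by linarith, ?_, ?_⟩
  · unfold cAlpha
    refine lt_min (by rw [hA]; linarith) (lt_min ?_ ?_)
    · have : 0 < ((2 : ℝ) ^ (α - 1) - 1) / (3 * 2 ^ α + 2) := div_pos (by linarith) hp2
      linarith
    · have : 0 < MM α / (4 * (2 ^ α + 1)) := div_pos hM hp3
      unfold MM at this
      linarith
  · have : ((2 : ℝ) ^ (α - 1) - 1) / (3 * 2 ^ α + 2) ≤ 1 / 6 := by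
      rw [div_le_div_iff₀ hp2 (by norm_num)]; linarith
    linarith
  · have h5 : cAlpha α - 1 ≤ MM α / (4 * (2 ^ α + 1)) := by linarith
    rw [le_div_iff₀ hp3] at h5
    linarith

lemma asymp {α : ℝ} (hα : 1 < α) (K1 K2 δ : ℝ) (hK1 : 0 ≤ K1) (hK2 : 0 ≤ K2) (hδ : 0 < δ) :
    ∃ N : ℕ, ∀ m : ℕ, N ≤ m →
      (K1 * m) ^ (1 / α) + 2 * (K2 * m) ^ (1 / α) + 20 ≤ δ * m := by
  have hlim : Filter.Tendsto (fun m : ℕ => (m : ℝ) ^ (-(1 - 1 / α))) Filter.atTop (nhds 0) := by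
    have : 0 < 1 - 1 / α := by
      rw [sub_pos, div_lt_one (by linarith)]; exact hα
    exact (tendsto_rpow_neg_atTop this).comp tendsto_natCast_atTop_atTop
  set κ := K1 ^ (1 / α) + 2 * K2 ^ (1 / α) with hκ
  have hκ0 : 0 ≤ κ := by positivity
  have h1 : Filter.Tendsto (fun m : ℕ => κ * (m : ℝ) ^ (-(1 - 1 / α)) + 20 * (m : ℝ)⁻¹)
      Filter.atTop (nhds 0) := by
    have h2 : Filter.Tendsto (fun m : ℕ => ((m : ℝ))⁻¹) Filter.atTop (nhds 0) :=
      tendsto_inv_atTop_nhds_zero_nat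
    have := (hlim.const_mul κ).add (h2.const_mul 20)
    simpa using this
  obtain ⟨N, hN⟩ := Filter.eventually_atTop.1 (h1.eventually (gt_mem_nhds hδ))
  refine ⟨N + 1, fun m hm => ?_⟩
  have h3 := hN m (by omega)
  have hm0 : (0 : ℝ) < m := by
    have : 0 < m := by omega
    exact_mod_cast this
  have e : (m : ℝ) ^ (1 / α) = (m : ℝ) ^ (-(1 - 1 / α)) * m := by
    nth_rewrite 3 [← Real.rpow_one (m : ℝ)]
    rw [← Real.rpow_add hm0]; congr 1; ring
  rw [Real.mul_rpow hK1 hm0.le, Real.mul_rpow hK2 hm0.le]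
  have h4 : (κ * (m : ℝ) ^ (-(1 - 1 / α)) + 20 * (m : ℝ)⁻¹) * m ≤ δ * m := by gcongr
  have h5 : (m : ℝ)⁻¹ * m = 1 := inv_mul_cancel₀ hm0.ne'
  have h6 : (κ * (m : ℝ) ^ (-(1 - 1 / α)) + 20 * (m : ℝ)⁻¹) * m =
      K1 ^ (1 / α) * m ^ (1 / α) + 2 * (K2 ^ (1 / α) * m ^ (1 / α)) + 20 * ((m : ℝ)⁻¹ * m) := by
    rw [e, hκ]; ring
  rw [h5] at h6
  linarith

lemma exists_params {m : ℕ} {D1 D2 : ℝ} (h1 : 1 ≤ D1) (h12 : D1 ≤ D2)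
    (hm : 5 * (D1 + D2 + 20) ≤ m) :
    ∃ a J : ℕ, Par m a J D1 D2 ∧ (Ls m a J : ℝ) + 2 ≤ 4 * (D1 + D2 + 20) := by
  set H := D1 + D2 with hH
  have hx : 0 ≤ (3 * (m : ℝ) - 2 - 3 * H) / 6 := by linarith
  have ha1 := Nat.floor_le hx
  have ha2 := Nat.lt_floor_add_one ((3 * (m : ℝ) - 2 - 3 * H) / 6)
  set a := ⌊(3 * (m : ℝ) - 2 - 3 * H) / 6⌋₊ with ha
  have hJ1 := Nat.le_ceil H
  have hJ2 := Nat.ceil_lt_add_one (by linarith : 0 ≤ H)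
  have hle : 6 * a + 2 ≤ 3 * m := by
    have : (6 * a + 2 : ℝ) ≤ 3 * m := by linarith
    exact_mod_cast this
  have hle2 : 4 * a + 1 ≤ 2 * m := by omega
  have hQ : (Qs m a : ℝ) = 3 * m - 2 - 6 * a := by
    unfold Qs
    rw [Nat.sub_sub, Nat.cast_sub (by omega)]; push_cast; ring
  have hL : (Ls m a ⌈H⌉₊ : ℝ) = 2 * (⌈H⌉₊ : ℝ) + (2 * m - 1 - 4 * a) := by
    unfold Ls
    rw [Nat.sub_sub, Nat.cast_add, Nat.cast_sub (by omega)]; push_cast; ring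
  refine ⟨a, ⌈H⌉₊, ⟨h1, h12, ?_, ?_, hJ1⟩, ?_⟩
  · linarith
  · rw [hQ]; linarith
  · rw [hL]; linarith

lemma main_m {α : ℝ} (hα : 1 < α) : ∃ N : ℕ, ∀ m : ℕ, N ≤ m →
      ∃ (P : Finset E2) (s q : E2),
        s ∈ P ∧ q ∉ P ∧ P.card = 2 * m ∧
        ∀ ρ ρ' : E2 → ℝ,
          Feasible P s ρ → cost α P ρ ≤ cAlpha α * opt α P s →
          Feasible (insert q P) s ρ' →
          cost α (insert q P) ρ' ≤ cAlpha α * opt α (insert q P) s →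
          (3 / 4 : ℝ) * m - 1 <
            (({p ∈ insert q (P : Set E2) |
                ρ' p ≠ Function.update ρ q 0 p}.ncard : ℝ)) := by
  obtain ⟨hb, h2, -, h3, -⟩ := consts hα
  obtain ⟨hc1, hc2, hc3, hc4⟩ := cAlpha_facts hα
  have hM := MM_pos hα
  have hM1 : MM α ≤ 2 ^ α - 1 := min_le_left _ _
  have hM2 : 2 * MM α ≤ 3 ^ α - 2 ^ α - 1 := by
    have : MM α ≤ (3 ^ α - 2 ^ α - 1) / 2 := (min_le_right _ _).trans (min_le_left _ _)
    linarith
  set c := cAlpha α with hc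
  set M := MM α with hMdef
  set β : ℝ := 2 ^ (α - 1) with hβ
  obtain ⟨ε, hε⟩ : ∃ ε, c = 1 + ε := ⟨c - 1, by ring⟩
  rw [hε] at hc1 hc2 hc3 hc4
  set u : ℝ := 1 + 2 ^ α with hu
  have hu1 : 1 < u := by linarith
  have hε0 : 0 < ε := by linarith
  -- the growth rate
  set A : ℝ := 2 ^ α with hA
  have hA0 : 0 < A := by linarith
  obtain ⟨δ, hδ0, hδ1, hδ2, hδ3⟩ : ∃ δ : ℝ, 0 < δ ∧ 5 * δ ≤ 1 ∧ A * (4 * δ) < ε * u ∧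
      8 * A * (4 * δ) ≤ M / 10 := by
    refine ⟨min (1 / 5) (min (ε * u / (8 * A)) (M / (320 * A))), ?_, ?_, ?_, ?_⟩
    · have : 0 < ε * u / (8 * A) := by positivity
      have : 0 < M / (320 * A) := by positivity
      exact lt_min (by norm_num) (lt_min ‹_› ‹_›)
    · have := min_le_left (1 / 5 : ℝ) (min (ε * u / (8 * A)) (M / (320 * A)))
      linarith
    · have h5 : min (1 / 5 : ℝ) (min (ε * u / (8 * A)) (M / (320 * A))) ≤ ε * u / (8 * A) :=
        (min_le_right _ _).trans (min_le_left _ _)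
      rw [le_div_iff₀ (by positivity)] at h5
      have : 0 < ε * u := by positivity
      linarith
    · have h5 : min (1 / 5 : ℝ) (min (ε * u / (8 * A)) (M / (320 * A))) ≤ M / (320 * A) :=
        (min_le_right _ _).trans (min_le_right _ _)
      rw [le_div_iff₀ (by positivity)] at h5
      linarith
  obtain ⟨N, hN⟩ := asymp hα ((1 + 3 * ε) * u) (u / 2) δ (by positivity) (by positivity) hδ0
  refine ⟨N + 2, fun m hm => ?_⟩
  have hNm := hN m (by omega)
  have hm2 : (2 : ℝ) ≤ m := by exact_mod_cast (by omega : 2 ≤ m)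
  have hmu : 0 < m * u := by positivity
  set D1 : ℝ := ((1 + 3 * ε) * u * m) ^ (1 / α) with hD1
  set D2 : ℝ := 2 * (u / 2 * m) ^ (1 / α) with hD2
  have hα0 : α ≠ 0 := by linarith
  have hinv : (1 / α) * α = 1 := by field_simp
  have eD1 : D1 ^ α = (1 + 3 * ε) * (m * u) := by
    rw [hD1, ← Real.rpow_mul (by positivity), hinv, Real.rpow_one]; ring
  have eD2h : (D2 / 2) ^ α = m * u / 2 := by
    rw [hD2, mul_div_cancel_left₀ _ (by norm_num : (2 : ℝ) ≠ 0), ← Real.rpow_mul (by positivity),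
      hinv, Real.rpow_one]; ring
  have hD20 : 0 ≤ D2 := by positivity
  have hD10 : 0 ≤ D1 := by positivity
  have eD2 : D2 ^ α = β * (m * u) := by
    have : D2 = 2 * (D2 / 2) := by ring
    rw [this, Real.mul_rpow (by norm_num) (by positivity), eD2h, ← hA, h2]; ring
  have hD1one : 1 ≤ D1 := by
    refine Real.one_le_rpow ?_ (by positivity)
    nlinarith [mul_pos hε0 hmu]
  have hD12 : D1 ≤ D2 := by
    by_contra hne
    push Not at hne
    have := Real.rpow_lt_rpow hD20 hne (by linarith : 0 < α)
    rw [eD1, eD2] at this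
    have := lt_of_mul_lt_mul_right this hmu.le
    linarith
  obtain ⟨a, J, hPar, hL⟩ := exists_params (m := m) hD1one hD12 (by nlinarith)
  have hsum : (1 + 3 * ε) * (m * u) + β * (m * u) ≤ (D1 + D2) ^ α := by
    rw [← eD1, ← eD2]
    exact Real.add_rpow_le_rpow_add hD10 hD20 hα.le
  have hL4 : (Ls m a J : ℝ) + 2 ≤ 4 * (δ * m) := by linarith
  have hAL : A * (Ls m a J + 2) < ε * (m * u) := by
    calc A * (Ls m a J + 2) ≤ A * (4 * (δ * m)) := by gcongr
      _ = (A * (4 * δ)) * m := by ring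
      _ < (ε * u) * m := by gcongr
      _ = _ := by ring
  have hAL2 : 8 * A * (Ls m a J + 1) ≤ M / 10 * m := by
    calc 8 * A * (Ls m a J + 1) ≤ 8 * A * (4 * (δ * m)) := by gcongr; linarith
      _ = (8 * A * (4 * δ)) * m := by ring
      _ ≤ _ := by gcongr
  have hεε : ε * ε ≤ ε / 6 := by nlinarith
  have hεmu : 0 < ε * (m * u) := by positivity
  have hεεmu : ε * ε * (m * u) ≤ ε / 6 * (m * u) := by gcongr
  have hβmu : 8 * (ε * (m * u)) ≤ (β - 1) * (m * u) := by
    rw [← mul_assoc]; gcongr; linarith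
  have hMmu : 4 * (ε * (m * u)) ≤ M * m := by
    calc 4 * (ε * (m * u)) = (4 * u * (1 + ε - 1)) * m := by ring
      _ ≤ _ := by gcongr
  refine ⟨PP m a D1 D2, 0, qq D2, mem_PP.2 (Or.inl rfl), qq_notMem hPar, card_PP hPar, ?_⟩
  intro ρ ρ' hf hcost hf' hcost'
  have o1 := opt1 hα hPar
  have o2 := opt2 hα hPar
  have k1 : cost α (PP m a D1 D2) ρ ≤ (1 + ε) * ((2 + 3 * ε) * (m * u)) := by
    refine hcost.trans ?_
    rw [hε]
    gcongr
    rw [eD1] at o1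
    linarith
  have k2 : cost α (insert (qq D2) (PP m a D1 D2)) ρ' ≤ (1 + ε) * (2 * (m * u)) := by
    refine hcost'.trans ?_
    rw [hε]
    gcongr
    rw [eD2h] at o2
    linarith
  have r1 := analysis1 hα hM.le hM1 hM2 hPar ρ hf k1 (lt_of_lt_of_le (by linarith) hsum)
    (by rw [eD2]; linarith)
  have r2 := analysis2 hα hM.le hM1 hM2 hPar ρ' hf' k2 (lt_of_lt_of_le (by linarith) hsum)
    (by rw [eD1]; linarith)
  have r3 := count_changed hPar ρ ρ'
  rw [eD1] at r1
  rw [eD2h] at r2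
  refine lt_of_lt_of_le ?_ r3
  have r4 : M * ((abn m (rr m a D1 D2 ρ)).card + (abn' m (rr m a D1 D2 ρ')).card) ≤
      M * (1.225 * m) := by
    have h9 : ε * (ε * (m * u)) ≤ 1 / 6 * (ε * (m * u)) := by gcongr; linarith
    linarith
  have r5 := le_of_mul_le_mul_left r4 hM
  linarith

end final

/-- The dynamic broadcast range-assignment problem in the Euclidean plane ℝ²
admits no stable approximation scheme: there is a constant `c_α > 1` such that for all large
`n` there is an instance of `2n+2` points in ℝ² and an insertion forcing any
`c_α`-approximate update algorithm to modify more than `2n/3 - 1` ranges. -/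
theorem no_sas_in_R2 (α : ℝ) (hα : 1 < α) :
    1 < cAlpha α ∧
    ∃ N : ℕ, ∀ n : ℕ, N ≤ n →
      ∃ (P : Finset (EuclideanSpace ℝ (Fin 2))) (s q : EuclideanSpace ℝ (Fin 2)),
        s ∈ P ∧ q ∉ P ∧ P.card = 2 * n + 2 ∧
        ∀ ρ ρ' : EuclideanSpace ℝ (Fin 2) → ℝ,
          Feasible P s ρ → cost α P ρ ≤ cAlpha α * opt α P s →
          Feasible (insert q P) s ρ' →
          cost α (insert q P) ρ' ≤ cAlpha α * opt α (insert q P) s →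
          2 * (n : ℝ) / 3 - 1 <
            (({p ∈ insert q (P : Set (EuclideanSpace ℝ (Fin 2))) |
                ρ' p ≠ Function.update ρ q 0 p}.ncard : ℝ)) := by
  refine ⟨(cAlpha_facts hα).1, ?_⟩
  obtain ⟨N, hN⟩ := main_m hα
  refine ⟨N, fun n hn => ?_⟩
  obtain ⟨P, s, q, h1, h2, h3, h4⟩ := hN (n + 1) (by omega)
  refine ⟨P, s, q, h1, h2, by rw [h3]; ring, fun ρ ρ' a1 a2 a3 a4 => ?_⟩
  refine lt_of_le_of_lt ?_ (h4 ρ ρ' a1 a2 a3 a4)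
  push_cast
  have : (0 : ℝ) ≤ n := Nat.cast_nonneg n
  linarith
end

section
/- There exists a function F assigning to every finite sequence (q₁, …, q_m) of distinct points of ℝ ∖ {0} a feasible range assignment ρ_m = F(q₁,…,q_m) for the set P_m = {0, q₁, …, q_m} (with source 0) such that for every such sequence: (i) cost_2(ρ_m) ≤ (6 + 2√5)·opt_2(P_m), and (ii) the number of points p ∈ P_m with ρ_m(p) ≠ ρ_{m−1}(p) is at most 1, where ρ_{m−1} = F(q₁,…,q_{m−1}) is extended by ρ_{m−1}(q_m) = 0. (This expresses the existence of a 1-stable, insertion-only (6+2√5)-approximation algorithm for the broadcast range-assignment problem in ℝ¹ for α = 2.) -/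
open Finset

attribute [local instance] Classical.propDecidable

/-- Blocks of consecutive gaps (starting point implicit). -/
inductive Blk where
  | A1 (b : ℝ)
  | A2 (x b : ℝ)
  | A3 (x y b : ℝ)
  | T (x y z b : ℝ)

namespace Blk

/-- last point of the block -/
def last : Blk → ℝ
  | A1 b => b
  | A2 _ b => b
  | A3 _ _ b => b
  | T _ _ _ b => b

/-- points of a sequence of blocks -/
def pts : List Blk → List ℝ
  | [] => []
  | A1 b :: r => b :: pts r
  | A2 x b :: r => x :: b :: pts r
  | A3 x y b :: r => x :: y :: b :: pts r
  | T x y z b :: r => x :: y :: z :: b :: pts r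

/-- insertion into a block -/
noncomputable def insB : Blk → ℝ → List Blk
  | A1 b, q => [A2 q b]
  | A2 x b, q => if q < x then [A3 q x b] else [A3 x q b]
  | A3 x y b, q => if q < x then [T q x y b] else if q < y then [T x q y b] else [T x y q b]
  | T x y z b, q => if q < x then [A3 q x y, A2 z b] else if q < y then [A3 x q y, A2 z b]
      else if q < z then [A2 x y, A3 q z b] else [A2 x y, A3 z q b]

/-- insertion into a sequence of blocks -/
noncomputable def ins : List Blk → ℝ → List Blk
  | [], q => [A1 q]
  | B :: r, q => if q < B.last then insB B q ++ r else B :: ins r q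

/-- ranges -/
noncomputable def rng : ℝ → List Blk → ℝ → ℝ
  | _, [] => fun _ => 0
  | a, A1 b :: r => Function.update (rng b r) a (b - a)
  | a, A2 _ b :: r => Function.update (rng b r) a (b - a)
  | a, A3 _ _ b :: r => Function.update (rng b r) a (b - a)
  | a, T _ y _ b :: r => Function.update (Function.update (rng b r) y (b - y)) a (b - a)

/-- strictly increasing from `a` -/
def SS : ℝ → List ℝ → Prop
  | _, [] => True
  | a, b :: t => a < b ∧ SS b t

/-- sum of squared gaps -/
def gs : ℝ → List ℝ → ℝ
  | _, [] => 0
  | a, b :: t => (b - a) ^ 2 + gs b t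

theorem SS.lt {a : ℝ} {t : List ℝ} (h : SS a t) : ∀ x ∈ t, a < x := by
  induction t generalizing a with
  | nil => simp
  | cons b t ih =>
    intro x hx
    obtain ⟨h1, h2⟩ := h
    rcases List.mem_cons.1 hx with rfl | hx
    · exact h1
    · exact h1.trans (ih h2 x hx)

theorem mem_ins (r : List Blk) (q p : ℝ) : p ∈ pts (ins r q) ↔ p = q ∨ p ∈ pts r := by
  induction r with
  | nil => simp [ins, pts]
  | cons B r ih =>
    unfold ins
    split_ifs with h
    · cases B <;> simp only [insB] <;> (try split_ifs) <;>
        simp only [pts, List.cons_append, List.nil_append, List.mem_cons] <;> tauto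
    · cases B <;> simp only [pts, List.mem_cons, ih] <;> tauto

theorem SS_ins {a : ℝ} {r : List Blk} {q : ℝ} (h : SS a (pts r)) (hq : a < q) (hn : q ∉ pts r) :
    SS a (pts (ins r q)) := by
  induction r generalizing a with
  | nil => simp [ins, pts, SS, hq]
  | cons B r ih =>
    unfold ins
    split_ifs with hl
    · cases B <;> simp only [insB] <;> (try split_ifs) <;>
        simp only [pts, List.cons_append, List.nil_append, SS, List.mem_cons, not_or, last] at * <;>
        grind
    · cases B <;> simp only [pts, SS, List.mem_cons, not_or, last] at * <;> grind

theorem rng_nonneg {a : ℝ} {r : List Blk} (h : SS a (pts r)) (p : ℝ) : 0 ≤ rng a r p := by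
  induction r generalizing a with
  | nil => simp [rng]
  | cons B r ih =>
    cases B <;> simp only [pts, SS, rng, Function.update_apply] at * <;> grind

theorem rng_zero {a : ℝ} {r : List Blk} {p : ℝ} (h : p ≠ a) (hp : p ∉ pts r) :
    rng a r p = 0 := by
  induction r generalizing a with
  | nil => simp [rng]
  | cons B r ih =>
    cases B <;> simp only [pts, rng, Function.update_apply, List.mem_cons, not_or] at * <;> grind

theorem rng_zero_lt {a : ℝ} {r : List Blk} {p : ℝ} (hs : SS a (pts r)) (h : p < a) :
    rng a r p = 0 :=
  rng_zero h.ne fun hp => by linarith [hs.lt p hp]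

theorem rng_ins (a : ℝ) (r : List Blk) (q : ℝ) :
    ∃ c, ∀ p, p ≠ c → rng a (ins r q) p = rng a r p := by
  induction r generalizing a with
  | nil => exact ⟨a, fun p hp => by simp [ins, rng, hp]⟩
  | cons B r ih =>
    unfold ins
    split_ifs with hl
    · cases B with
      | A1 b => exact ⟨a, fun p hp => by simp [insB, rng]⟩
      | A2 x b => exact ⟨a, fun p hp => by simp only [insB]; split_ifs <;> simp [rng]⟩
      | A3 x y b =>
        simp only [insB]
        split_ifs
        · exact ⟨x, fun p hp => by simp [rng, Function.update_apply, hp]⟩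
        · exact ⟨q, fun p hp => by simp [rng, Function.update_apply, hp]⟩
        · exact ⟨y, fun p hp => by simp [rng, Function.update_apply, hp]⟩
      | T x y z b =>
        refine ⟨a, fun p hp => ?_⟩
        simp only [insB]
        split_ifs <;> simp [rng, Function.update_apply, hp]
    · obtain ⟨c, hc⟩ := ih B.last
      refine ⟨c, fun p hp => ?_⟩
      cases B <;> simp only [rng, last, Function.update_apply] at * <;> rw [hc p hp]

theorem sum_update (P : Finset ℝ) (f : ℝ → ℝ) (a v : ℝ) :
    ∑ p ∈ P, (Function.update f a v p) ^ 2 ≤ v ^ 2 + ∑ p ∈ P, f p ^ 2 := by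
  by_cases ha : a ∈ P
  · rw [← Finset.add_sum_erase P _ ha, ← Finset.add_sum_erase P (fun p => f p ^ 2) ha]
    have : ∑ p ∈ P.erase a, (Function.update f a v p) ^ 2 = ∑ p ∈ P.erase a, f p ^ 2 := by
      refine Finset.sum_congr rfl fun p hp => ?_
      rw [Function.update_of_ne (Finset.ne_of_mem_erase hp)]
    rw [this, Function.update_self]
    nlinarith [sq_nonneg (f a)]
  · have : ∑ p ∈ P, (Function.update f a v p) ^ 2 = ∑ p ∈ P, f p ^ 2 := by
      refine Finset.sum_congr rfl fun p hp => ?_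
      rw [Function.update_of_ne (by rintro rfl; exact ha hp)]
    rw [this]
    nlinarith [sq_nonneg v]

theorem key4 (s x y z w : ℝ) (hs : s ^ 2 = 5) (h0 : 0 ≤ s) :
    (x + y + z + w) ^ 2 + (z + w) ^ 2 ≤ (3 + s) * (x ^ 2 + y ^ 2 + z ^ 2 + w ^ 2) := by
  have h1 : ∀ u v : ℝ, (u + v) ^ 2 + v ^ 2 ≤ (3 + s) / 2 * (u ^ 2 + v ^ 2) := by
    intro u v
    have h2 : (3 + s) / 2 * (u ^ 2 + v ^ 2) - ((u + v) ^ 2 + v ^ 2)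
        = (1 + s) / 2 * (u - (s - 1) / 2 * v) ^ 2 := by
      have h3 : s ^ 3 = 5 * s := by rw [pow_succ, hs]
      ring_nf
      simp only [h3, hs]
      ring
    have : 0 ≤ (1 + s) / 2 * (u - (s - 1) / 2 * v) ^ 2 := by positivity
    linarith
  have h2 := h1 (x + y) (z + w)
  have h3 : (x + y) ^ 2 + (z + w) ^ 2 ≤ 2 * (x ^ 2 + y ^ 2 + z ^ 2 + w ^ 2) := by
    nlinarith [sq_nonneg (x - y), sq_nonneg (z - w)]
  have h4 : (3 + s) / 2 * ((x + y) ^ 2 + (z + w) ^ 2)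
      ≤ (3 + s) / 2 * (2 * (x ^ 2 + y ^ 2 + z ^ 2 + w ^ 2)) :=
    mul_le_mul_of_nonneg_left h3 (by linarith)
  have h5 : (x + y + (z + w)) ^ 2 = (x + y + z + w) ^ 2 := by ring
  linarith

theorem sum_rng (P : Finset ℝ) (s : ℝ) (hs : s ^ 2 = 5) (h0 : 0 ≤ s) (a : ℝ) (r : List Blk) :
    ∑ p ∈ P, (rng a r p) ^ 2 ≤ (3 + s) * gs a (pts r) := by
  induction r generalizing a with
  | nil => simp [rng, pts, gs]
  | cons B r ih =>
    cases B with
    | A1 b =>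
      simp only [rng, pts, gs]
      have := sum_update P (rng b r) a (b - a)
      have := ih b
      nlinarith [mul_nonneg h0 (sq_nonneg (b - a)), sq_nonneg (b - a)]
    | A2 x b =>
      simp only [rng, pts, gs]
      have := sum_update P (rng b r) a (b - a)
      have := ih b
      have := key4 s (x - a) (b - x) 0 0 hs h0
      have e : (x - a + (b - x) + 0 + 0) ^ 2 = (b - a) ^ 2 := by ring
      rw [e] at this
      linarith
    | A3 x y b =>
      simp only [rng, pts, gs]
      have := sum_update P (rng b r) a (b - a)
      have := ih b
      have := key4 s (x - a) (y - x) (b - y) 0 hs h0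
      have e : (x - a + (y - x) + (b - y) + 0) ^ 2 = (b - a) ^ 2 := by ring
      rw [e] at this
      nlinarith [sq_nonneg (b - y + 0)]
    | T x y z b =>
      simp only [rng, pts, gs]
      have := sum_update P (Function.update (rng b r) y (b - y)) a (b - a)
      have := sum_update P (rng b r) y (b - y)
      have := ih b
      have := key4 s (x - a) (y - x) (z - y) (b - z) hs h0
      have e : (x - a + (y - x) + (z - y) + (b - z)) ^ 2 = (b - a) ^ 2 := by ring
      have e' : (z - y + (b - z)) ^ 2 = (b - y) ^ 2 := by ring
      rw [e, e'] at this
      linarith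

/-- one-step relation -/
def St (P : Finset ℝ) (ρ : ℝ → ℝ) (x y : ℝ) : Prop := x ∈ P ∧ y ∈ P ∧ dist x y ≤ ρ x

theorem reach_seq {P : Finset ℝ} {ρ : ℝ → ℝ} {s p : ℝ} (hs : s ∈ P)
    (h : Relation.ReflTransGen (St P ρ) s p) :
    ∃ (m : ℕ) (f : ℕ → ℝ), f 0 = s ∧ f m = p ∧ (∀ i ≤ m, f i ∈ P) ∧
      ∀ i < m, dist (f i) (f (i + 1)) ≤ ρ (f i) := by
  induction h with
  | refl => exact ⟨0, fun _ => s, rfl, rfl, fun _ _ => hs, by simp⟩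
  | tail _ hst ih =>
    rename_i b c _
    obtain ⟨m, f, h0, hm, hP, hd⟩ := ih
    obtain ⟨_, hc, hbc⟩ := hst
    refine ⟨m + 1, fun i => if i ≤ m then f i else c, by simp [h0], by simp, ?_, ?_⟩
    · intro i hi
      by_cases him : i ≤ m
      · simpa [him] using hP i him
      · simpa [him] using hc
    · intro i hi
      by_cases him : i + 1 ≤ m
      · have : i ≤ m := by omega
        simpa [him, this] using hd i him
      · have : i = m := by omega
        subst this
        simpa [hm] using hbc

theorem reach (e : ℝ → ℝ) (he : ∀ x y, dist (e x) (e y) = |x - y|) (P : Finset ℝ) (ρ : ℝ → ℝ)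
    (a : ℝ) (r : List Blk) (hs : SS a (pts r)) (ha : e a ∈ P) (hP : ∀ p ∈ pts r, e p ∈ P)
    (hρ : ∀ p, rng a r p ≤ ρ (e p)) :
    ∀ p ∈ pts r, Relation.ReflTransGen (St P ρ) (e a) (e p) := by
  induction r generalizing a with
  | nil => simp [pts]
  | cons B r ih =>
    have step : ∀ b, a < b → e b ∈ P → b - a ≤ ρ (e a) → St P ρ (e a) (e b) := by
      intro b hab hb h
      refine ⟨ha, hb, ?_⟩
      rw [he, abs_sub_comm, abs_of_pos (by linarith)]
      exact h
    have key : ∀ b, (∀ p, rng b r p ≤ ρ (e p)) → a < b → b - a ≤ ρ (e a) → SS b (pts r) →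
        e b ∈ P → (∀ p ∈ pts r, e p ∈ P) →
        ∀ p ∈ pts r, Relation.ReflTransGen (St P ρ) (e a) (e p) := by
      intro b h1 h2 h3 h4 h5 h6 p hp
      exact Relation.ReflTransGen.head (step b h2 h5 h3) (ih b h4 h5 h6 h1 p hp)
    have hra := hρ a
    cases B with
    | A1 b =>
      simp only [rng, Function.update_self, pts, SS, List.forall_mem_cons] at *
      have h1 : ∀ p, rng b r p ≤ ρ (e p) := by
        intro p
        have := hρ p
        by_cases hp : p = a
        · subst hp; rw [rng_zero_lt hs.2 hs.1]; linarith
        · rwa [Function.update_of_ne hp] at this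
      exact ⟨.single (step b hs.1 hP.1 hra), key b h1 hs.1 hra hs.2 hP.1 hP.2⟩
    | A2 x b =>
      simp only [rng, Function.update_self, pts, SS, List.forall_mem_cons] at *
      obtain ⟨hax, hxb, hs⟩ := hs
      obtain ⟨hPx, hPb, hP⟩ := hP
      have hab : a < b := by linarith
      have h1 : ∀ p, rng b r p ≤ ρ (e p) := by
        intro p
        have := hρ p
        by_cases hp : p = a
        · subst hp; rw [rng_zero_lt hs hab]; linarith
        · rwa [Function.update_of_ne hp] at this
      exact ⟨.single (step x hax hPx (by linarith)), .single (step b hab hPb hra),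
        key b h1 hab hra hs hPb hP⟩
    | A3 x y b =>
      simp only [rng, Function.update_self, pts, SS, List.forall_mem_cons] at *
      obtain ⟨hax, hxy, hyb, hs⟩ := hs
      obtain ⟨hPx, hPy, hPb, hP⟩ := hP
      have hab : a < b := by linarith
      have h1 : ∀ p, rng b r p ≤ ρ (e p) := by
        intro p
        have := hρ p
        by_cases hp : p = a
        · subst hp; rw [rng_zero_lt hs hab]; linarith
        · rwa [Function.update_of_ne hp] at this
      exact ⟨.single (step x hax hPx (by linarith)),
        .single (step y (by linarith) hPy (by linarith)), .single (step b hab hPb hra),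
        key b h1 hab hra hs hPb hP⟩
    | T x y z b =>
      simp only [rng, Function.update_self, pts, SS, List.forall_mem_cons] at *
      obtain ⟨hax, hxy, hyz, hzb, hs⟩ := hs
      obtain ⟨hPx, hPy, hPz, hPb, hP⟩ := hP
      have hab : a < b := by linarith
      have h1 : ∀ p, rng b r p ≤ ρ (e p) := by
        intro p
        have := hρ p
        by_cases hp : p = a
        · subst hp; rw [rng_zero_lt hs hab]; linarith
        · rw [Function.update_of_ne hp] at this
          by_cases hp' : p = y
          · subst hp'; rw [rng_zero_lt hs (by linarith)]
            rw [Function.update_self] at this; linarith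
          · rwa [Function.update_of_ne hp'] at this
      exact ⟨.single (step x hax hPx (by linarith)),
        .single (step y (by linarith) hPy (by linarith)),
        .single (step z (by linarith) hPz (by linarith)), .single (step b hab hPb hra),
        key b h1 hab hra hs hPb hP⟩

/-! Lower bound -/

open Classical in
/-- squared gaps crossed rightwards from `c` with range `r` -/
noncomputable def W (c r : ℝ) : ℝ → List ℝ → ℝ
  | _, [] => 0
  | a, b :: t => (if c ≤ a ∧ b ≤ c + r then (b - a) ^ 2 else 0) + W c r b t

theorem W_le (c r a : ℝ) (t : List ℝ) (hs : SS a t) :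
    W c r a t ≤ (max 0 (c + r - max c a)) ^ 2 := by
  induction t generalizing a with
  | nil => simp only [W]; positivity
  | cons b t ih =>
    obtain ⟨hab, hs⟩ := hs
    have := ih b hs
    simp only [W]
    split_ifs with h
    · obtain ⟨h1, h2⟩ := h
      rw [max_eq_right (by linarith : c ≤ b), max_eq_right (by linarith)] at this
      rw [max_eq_right h1, max_eq_right (by linarith)]
      nlinarith [mul_nonneg (sub_nonneg.2 hab.le) (sub_nonneg.2 h2)]
    · rw [zero_add]
      refine this.trans ?_
      gcongr

theorem W_le' (c r a : ℝ) (t : List ℝ) (hs : SS a t) (hr : 0 ≤ r) : W c r a t ≤ r ^ 2 := by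
  refine (W_le c r a t hs).trans ?_
  have : max 0 (c + r - max c a) ≤ r := max_le hr (by linarith [le_max_left c a])
  gcongr

theorem cross {P : Finset ℝ} {ρ : ℝ → ℝ} (hF : Feasible P 0 ρ) (u v : ℝ) (hu : 0 ≤ u) (huv : u < v)
    (hv : v ∈ P) (hP : ∀ p ∈ P, p ≤ u ∨ v ≤ p) : ∃ c ∈ P, c ≤ u ∧ v ≤ c + ρ c := by
  obtain ⟨m, f, h0, hm, hfP, hd⟩ := hF.2 v hv
  by_contra! hcon
  have : ∀ i ≤ m, f i ≤ u := by
    intro i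
    induction i with
    | zero => intro _; rw [h0]; exact hu
    | succ i ih =>
      intro hi
      have h1 := ih (by omega)
      have h2 := hcon (f i) (hfP i (by omega)) h1
      have h3 := hd i (by omega)
      rw [Real.dist_eq, abs_sub_comm] at h3
      have h4 := le_abs_self (f (i + 1) - f i)
      rcases hP _ (hfP (i + 1) hi) with h | h
      · exact h
      · linarith
  linarith [this m le_rfl]

theorem gs_le_W {P : Finset ℝ} {ρ : ℝ → ℝ} (hF : Feasible P 0 ρ) (a : ℝ) (t : List ℝ) (ha : 0 ≤ a)
    (hs : SS a t) (ht : ∀ p ∈ t, p ∈ P) (hP : ∀ p ∈ P, p ≤ a ∨ p ∈ t) :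
    gs a t ≤ ∑ c ∈ P, W c (ρ c) a t := by
  induction t generalizing a with
  | nil => simp [gs, W]
  | cons b t ih =>
    obtain ⟨hab, hs⟩ := hs
    simp only [gs, W, Finset.sum_add_distrib]
    have hP' : ∀ p ∈ P, p ≤ a ∨ b ≤ p := by
      intro p hp
      rcases hP p hp with h | h
      · exact .inl h
      · rcases List.mem_cons.1 h with rfl | h
        · exact .inr le_rfl
        · exact .inr (hs.lt p h).le
    obtain ⟨c, hc, h1, h2⟩ := cross hF a b ha hab (ht b (by simp)) hP'
    refine add_le_add ?_ (ih b (by linarith) hs (fun p hp => ht p (by simp [hp])) ?_)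
    · refine le_trans ?_ (Finset.single_le_sum (f := fun c => if c ≤ a ∧ b ≤ c + ρ c then (b - a) ^ 2 else 0)
        (fun i _ => ?_) hc)
      · simp [h1, h2]
      · split_ifs <;> positivity
    · intro p hp
      rcases hP p hp with h | h
      · left; linarith
      · rcases List.mem_cons.1 h with rfl | h
        · exact .inl le_rfl
        · exact .inr h

theorem gs_le {P : Finset ℝ} {ρ : ℝ → ℝ} (hF : Feasible P 0 ρ) (t : List ℝ)
    (hs : SS 0 t) (ht : ∀ p ∈ t, p ∈ P) (hP : ∀ p ∈ P, p ≤ 0 ∨ p ∈ t) :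
    gs 0 t ≤ ∑ c ∈ P, ρ c ^ 2 :=
  (gs_le_W hF 0 t le_rfl hs ht hP).trans
    (Finset.sum_le_sum fun c hc => W_le' c (ρ c) 0 t hs (hF.1 c hc))

theorem feas_neg {P : Finset ℝ} {ρ : ℝ → ℝ} (hF : Feasible P 0 ρ) :
    Feasible (P.image (fun x => -x)) 0 (fun x => ρ (-x)) := by
  refine ⟨?_, ?_⟩
  · intro p hp
    obtain ⟨x, hx, rfl⟩ := Finset.mem_image.1 hp
    simpa using hF.1 x hx
  · intro p hp
    obtain ⟨x, hx, rfl⟩ := Finset.mem_image.1 hp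
    obtain ⟨m, f, h0, hm, hfP, hd⟩ := hF.2 x hx
    refine ⟨m, fun i => - f i, by simp [h0], by simp [hm], fun i hi => ?_, fun i hi => ?_⟩
    · exact Finset.mem_image_of_mem _ (hfP i hi)
    · simpa [dist_neg_neg] using hd i hi

/-- state update -/
noncomputable def upd (S : List Blk × List Blk) (q : ℝ) : List Blk × List Blk :=
  if 0 < q then (ins S.1 q, S.2) else (S.1, ins S.2 (-q))

/-- state -/
noncomputable def st (l : List ℝ) : List Blk × List Blk := l.foldl upd ([], [])

/-- the algorithm -/
noncomputable def alg (S : List Blk × List Blk) (p : ℝ) : ℝ := max (rng 0 S.1 p) (rng 0 S.2 (-p))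

theorem st_append (l : List ℝ) (q : ℝ) : st (l ++ [q]) = upd (st l) q := by
  simp [st]

theorem inv (l : List ℝ) (hl : l.Nodup) (h0 : ∀ x ∈ l, x ≠ 0) :
    SS 0 (pts (st l).1) ∧ SS 0 (pts (st l).2) ∧
    (∀ p, p ∈ pts (st l).1 ↔ 0 < p ∧ p ∈ l) ∧ (∀ p, p ∈ pts (st l).2 ↔ 0 < p ∧ -p ∈ l) := by
  induction l using List.reverseRecOn with
  | nil => simp [st, pts, SS]
  | append_singleton l q ih =>
    rw [List.nodup_append] at hl
    obtain ⟨hn, _, hd⟩ := hl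
    have hql : q ∉ l := fun h => hd q h q (by simp) rfl
    obtain ⟨i1, i2, i3, i4⟩ := ih hn (fun x hx => h0 x (by simp [hx]))
    have hq0 : q ≠ 0 := h0 q (by simp)
    rw [st_append]
    unfold upd
    split_ifs with hq
    · refine ⟨SS_ins i1 hq (by rw [i3]; tauto), i2, fun p => ?_, fun p => ?_⟩
      · simp only [mem_ins, i3, List.mem_append, List.mem_singleton]
        constructor
        · rintro (rfl | h)
          · exact ⟨hq, .inr rfl⟩
          · exact ⟨h.1, .inl h.2⟩
        · tauto
      · simp only [i4, List.mem_append, List.mem_singleton]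
        refine and_congr_right fun hp => ⟨.inl, ?_⟩
        rintro (h | h)
        · exact h
        · linarith
    · have hq' : q < 0 := lt_of_le_of_ne (not_lt.1 hq) hq0
      refine ⟨i1, SS_ins i2 (by linarith) (by rw [i4, neg_neg]; tauto), fun p => ?_, fun p => ?_⟩
      · simp only [i3, List.mem_append, List.mem_singleton]
        refine and_congr_right fun hp => ⟨.inl, ?_⟩
        rintro (h | h)
        · exact h
        · linarith
      · simp only [mem_ins, i4, List.mem_append, List.mem_singleton]
        constructor
        · rintro (rfl | h)
          · exact ⟨by linarith, .inr (neg_neg q)⟩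
          · exact ⟨h.1, .inl h.2⟩
        · rintro ⟨h, h' | h'⟩
          · exact .inr ⟨h, h'⟩
          · exact .inl (by linarith)

theorem alg_feas (l : List ℝ) (hl : l.Nodup) (h0 : ∀ x ∈ l, x ≠ 0) :
    Feasible (insert (0:ℝ) l.toFinset) 0 (alg (st l)) := by
  obtain ⟨i1, i2, i3, i4⟩ := inv l hl h0
  refine ⟨fun p _ => le_max_of_le_left (rng_nonneg i1 p), fun p hp => ?_⟩
  refine reach_seq (by simp) ?_
  rw [Finset.mem_insert, List.mem_toFinset] at hp
  rcases hp with rfl | hp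
  · exact .refl
  rcases lt_or_gt_of_ne (h0 p hp) with hneg | hpos
  · have := reach (fun x => -x) (fun x y => by rw [dist_neg_neg, Real.dist_eq])
      (insert (0:ℝ) l.toFinset) (alg (st l)) 0 _ i2 (by simp)
      (fun p hp => by
        have := (i4 p).1 hp
        simp [this.2]) (fun p => by
          simp only [alg, neg_neg]; exact le_max_right _ _) (-p)
        ((i4 _).2 ⟨by linarith, by simpa using hp⟩)
    simpa using this
  · exact reach (fun x => x) (fun x y => Real.dist_eq x y)
      (insert (0:ℝ) l.toFinset) (alg (st l)) 0 _ i1 (by simp)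
      (fun p hp => by
        have := (i3 p).1 hp
        simp [this.2]) (fun p => le_max_left _ _) p ((i3 _).2 ⟨hpos, hp⟩)

theorem alg_cost (l : List ℝ) (hl : l.Nodup) (h0 : ∀ x ∈ l, x ≠ 0) :
    cost 2 (insert (0:ℝ) l.toFinset) (alg (st l)) ≤
      (6 + 2 * Real.sqrt 5) * opt 2 (insert (0:ℝ) l.toFinset) 0 := by
  obtain ⟨i1, i2, i3, i4⟩ := inv l hl h0
  set P := insert (0:ℝ) l.toFinset with hPdef
  have hmem : ∀ p, p ∈ P ↔ p = 0 ∨ p ∈ l := fun p => by simp [hPdef]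
  set s := Real.sqrt 5 with hsdef
  have hs : s ^ 2 = 5 := Real.sq_sqrt (by norm_num)
  have hs0 : 0 ≤ s := Real.sqrt_nonneg 5
  have hopt : (gs 0 (pts (st l).1) + gs 0 (pts (st l).2)) / 2 ≤ opt 2 P 0 := by
    refine le_csInf ⟨_, _, alg_feas l hl h0, rfl⟩ ?_
    rintro c ⟨ρ, hF, rfl⟩
    have g1 := gs_le hF _ i1 (fun p hp => (hmem p).2 (.inr ((i3 p).1 hp).2)) (fun p hp => by
      rcases le_or_gt p 0 with h | h
      · exact .inl h
      · right
        refine (i3 p).2 ⟨h, ?_⟩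
        rcases (hmem p).1 hp with rfl | hp
        · exact absurd h (lt_irrefl _)
        · exact hp)
    have g2 := gs_le (feas_neg hF) _ i2 (fun p hp => by
      refine Finset.mem_image.2 ⟨-p, (hmem _).2 (.inr ((i4 p).1 hp).2), neg_neg p⟩) (fun p hp => by
      rcases le_or_gt p 0 with h | h
      · exact .inl h
      · right
        refine (i4 p).2 ⟨h, ?_⟩
        obtain ⟨x, hx, rfl⟩ := Finset.mem_image.1 hp
        rcases (hmem x).1 hx with rfl | hp
        · simp at h
        · simpa using hp)
    rw [Finset.sum_image (fun x _ y _ h => neg_injective h)] at g2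
    simp only [neg_neg] at g2
    simp only [cost, Real.rpow_two]
    linarith
  have hc : cost 2 P (alg (st l)) ≤
      (3 + s) * (gs 0 (pts (st l).1) + gs 0 (pts (st l).2)) := by
    have c1 := sum_rng P s hs hs0 0 (st l).1
    have c2 := sum_rng (P.image (fun x => -x)) s hs hs0 0 (st l).2
    rw [Finset.sum_image (fun x _ y _ h => neg_injective h)] at c2
    have c3 : cost 2 P (alg (st l)) ≤
        ∑ p ∈ P, (rng 0 (st l).1 p) ^ 2 + ∑ p ∈ P, (rng 0 (st l).2 (-p)) ^ 2 := by
      rw [← Finset.sum_add_distrib]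
      simp only [cost, Real.rpow_two]
      refine Finset.sum_le_sum fun p _ => ?_
      unfold alg
      rcases max_choice (rng 0 (st l).1 p) (rng 0 (st l).2 (-p)) with h | h <;> rw [h] <;>
        nlinarith [sq_nonneg (rng 0 (st l).1 p), sq_nonneg (rng 0 (st l).2 (-p))]
    linarith
  nlinarith [mul_le_mul_of_nonneg_left hopt (by linarith : 0 ≤ 6 + 2 * s)]

theorem alg_stable (l : List ℝ) (q : ℝ) (hl : (l ++ [q]).Nodup) (h0 : ∀ x ∈ l ++ [q], x ≠ 0) :
    ∃ c, ∀ p, p ≠ c → alg (st (l ++ [q])) p = Function.update (alg (st l)) q 0 p := by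
  rw [List.nodup_append] at hl
  obtain ⟨hn, _, hd⟩ := hl
  have hql : q ∉ l := fun h => hd q h q (by simp) rfl
  obtain ⟨i1, i2, i3, i4⟩ := inv l hn (fun x hx => h0 x (by simp [hx]))
  have hq0 : q ≠ 0 := h0 q (by simp)
  have hz : alg (st l) q = 0 := by
    unfold alg
    rw [rng_zero hq0 (by rw [i3]; tauto),
      rng_zero (neg_ne_zero.2 hq0) (by rw [i4, neg_neg]; tauto), max_self]
  have hu : Function.update (alg (st l)) q 0 = alg (st l) := by
    rw [← hz, Function.update_eq_self]
  rw [hu, st_append]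
  unfold upd
  split_ifs with hq
  · obtain ⟨c, hc⟩ := rng_ins 0 (st l).1 q
    exact ⟨c, fun p hp => by simp only [alg]; rw [hc p hp]⟩
  · obtain ⟨c, hc⟩ := rng_ins 0 (st l).2 (-q)
    exact ⟨-c, fun p hp => by
      simp only [alg]; rw [hc (-p) (fun h => hp (by linarith))]⟩

end Blk

theorem one_stable_insertion_only :
    ∃ F : List ℝ → (ℝ → ℝ),
      (∀ l : List ℝ, l.Nodup → (∀ x ∈ l, x ≠ 0) →
        Feasible (insert (0:ℝ) l.toFinset) 0 (F l) ∧
        cost 2 (insert (0:ℝ) l.toFinset) (F l) ≤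
          (6 + 2 * Real.sqrt 5) * opt 2 (insert (0:ℝ) l.toFinset) 0) ∧
      (∀ (l : List ℝ) (q : ℝ), (l ++ [q]).Nodup → (∀ x ∈ l ++ [q], x ≠ 0) →
        {p ∈ insert (0:ℝ) ((l ++ [q]).toFinset : Set ℝ) |
          F (l ++ [q]) p ≠ Function.update (F l) q 0 p}.ncard ≤ 1) := by
  refine ⟨fun l => Blk.alg (Blk.st l), fun l hl h0 => ⟨Blk.alg_feas l hl h0, Blk.alg_cost l hl h0⟩,
    fun l q hl h0 => ?_⟩
  obtain ⟨c, hc⟩ := Blk.alg_stable l q hl h0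
  rw [← Set.ncard_singleton c]
  refine Set.ncard_le_ncard ?_ (Set.finite_singleton c)
  rintro p ⟨_, hp⟩
  by_contra hpc
  exact hp (hc p hpc)
end
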